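/- arXiv:2210.02434 — 5 statements merged into one kernel-verified Lean document; each statement's English description precedes it below -/
import Mathlib

section
/- (Theorem of Baptiste and Sadykov, as used in the paper.) Let 𝓘 = {I_r}_{r∈Q} be a partition of the time horizon based on due dates and let σ = {σ_r}_{r∈Q} be a set of permutations consistent with the WSPT/LPT ordering rules. If for each r ∈ Q and each pair of jobs i, j ∈ J with σ_r(i) < σ_r(j) at least one of the conditions (1) e_r ≤ e_{r−1} + p_j or (2) e_{r−1} ≥ d_i + ⌈w_j·p_i / w_i⌉ − p_i holds, then the partition is appropriate: there exists an optimal schedule without idle time in which all completion times are at most T and such that for every r ∈ Q and every pair of jobs i ≠ j with μ(i) = μ(j), C_i ∈ I_r, C_j ∈ I_r and σ_r(i) < σ_r(j), job i is sequenced before job j (S_i < S_j). -/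
open Finset

/-!
Shifting jobs to the left, and moving a job that ends after the horizon behind the last job of a
machine with small load, turns any schedule into one without idle time inside the horizon, and no
job starts later than before. Only finitely many schedules are without idle time and inside the
horizon. Among them choose one that minimizes the weighted tardiness, then maximizes the sum of the
start times, then maximizes the sum of the completion times, each weighted by the rank `σ_r` of its
job in the interval `I_r` where the job completes.

If two jobs on one machine that complete in `I_r` are sequenced against `σ_r`, then so are two
adjacent ones, say `j` directly followed by `i` with `σ_r i < σ_r j`. Exchange them. If `j` is
late, condition (2) or the WSPT rule prevents a loss; if `j` is on time, it remains so. When the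
weighted tardiness does not decrease, the LPT rules give `p j ≤ p i`, so the sum of the start times
increases or, if `p j = p i`, the rank-weighted sum of the completion times does.
-/

variable {J M : Type*}

section Schedules

variable {p S : J → ℕ} {μ : J → M}

/-- Feasibility of the assignment `μ` of jobs to machines and the start times `S`: jobs on the same
machine do not overlap. -/
def IsSchedule (p : J → ℕ) (μ : J → M) (S : J → ℕ) : Prop :=
  ∀ i j, i ≠ j → μ i = μ j → S i + p i ≤ S j ∨ S j + p j ≤ S i

/-- The total processing time assigned to the machine `k`. -/
def load [Fintype J] [DecidableEq M] (p : J → ℕ) (μ : J → M) (k : M) : ℕ :=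
  ∑ j with μ j = k, p j

/-- No machine is idle before it has finished all its jobs. -/
def HasNoIdleTime [Fintype J] [DecidableEq M] (p : J → ℕ) (μ : J → M) (S : J → ℕ) : Prop :=
  ∀ k u, u < load p μ k → ∃ j, μ j = k ∧ S j ≤ u ∧ u < S j + p j

/-- Every job completes within the load of its machine. For a schedule this is a form of the
absence of idle time that is easy to check after jobs have been moved. -/
def IsPacked [Fintype J] [DecidableEq M] (p : J → ℕ) (μ : J → M) (S : J → ℕ) : Prop :=
  ∀ j, S j + p j ≤ load p μ (μ j)

/-- The horizon `T` of the scheduling problem. -/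
def horizon (M : Type*) [Fintype J] [Fintype M] (p : J → ℕ) : ℕ :=
  (∑ j, p j - univ.sup p) ⌈/⌉ Fintype.card M + univ.sup p

theorem IsSchedule.completion_le_start (hS : IsSchedule p μ S) {i j : J} (hμ : μ i = μ j)
    (hij : S i < S j) : S i + p i ≤ S j := by
  have := hS i j (by rintro rfl; exact hij.false) hμ
  omega

theorem IsSchedule.completion_le_completion (hS : IsSchedule p μ S) {i j : J} (hj : 0 < p j)
    (hμ : μ i = μ j) (hij : S i ≤ S j) : S i + p i ≤ S j + p j := by
  rcases eq_or_ne i j with rfl | hne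
  · rfl
  · have := hS i j hne hμ
    omega

theorem IsSchedule.sum_le_card (hS : IsSchedule p μ S) {A : Finset J} {k : M}
    (hA : ∀ j ∈ A, μ j = k) {X : Finset ℕ} (hX : ∀ j ∈ A, Ico (S j) (S j + p j) ⊆ X) :
    ∑ j ∈ A, p j ≤ #X := by
  have hdisj : (A : Set J).PairwiseDisjoint fun j ↦ Ico (S j) (S j + p j) := by
    intro i hi j hj hij
    have := hS i j hij ((hA i hi).trans (hA j hj).symm)
    simp only [Function.onFun, disjoint_left, mem_Ico]
    omega
  calc ∑ j ∈ A, p j = #(A.biUnion fun j ↦ Ico (S j) (S j + p j)) := by simp [card_biUnion hdisj]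
    _ ≤ #X := card_le_card (biUnion_subset.mpr hX)

variable [Fintype J] [DecidableEq M]

theorem IsSchedule.hasNoIdleTime (hS : IsSchedule p μ S) (hpack : IsPacked p μ S) :
    HasNoIdleTime p μ S := by
  intro k u hu
  by_contra! hidle
  have hle : load p μ k ≤ #((range (load p μ k)).erase u) := by
    refine hS.sum_le_card (k := k) (by simp) fun j hj v hv ↦ ?_
    obtain rfl : μ j = k := by simpa using hj
    have := hidle j rfl
    have := hpack j
    simp only [mem_Ico, mem_erase, mem_range] at hv ⊢
    omega
  rw [card_erase_of_mem (mem_range.mpr hu), card_range] at hle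
  omega

theorem IsSchedule.exists_start_eq_completion (hS : IsSchedule p μ S) (hpack : IsPacked p μ S)
    (hp : ∀ j, 0 < p j) {i j : J} (hμ : μ i = μ j) (hij : S i < S j) :
    ∃ l, μ l = μ i ∧ S l = S i + p i := by
  have hend : S i + p i ≤ S j := hS.completion_le_start hμ hij
  have hload : S j + p j ≤ load p μ (μ i) := hμ ▸ hpack j
  have := hp j
  obtain ⟨l, hl, hle, hlt⟩ := hS.hasNoIdleTime hpack (μ i) (S i + p i) (by omega)
  have := hp i
  have := hS i l (by rintro rfl; omega) hl.symm
  exact ⟨l, hl, by omega⟩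

theorem IsSchedule.exists_adjacent_inversion (hS : IsSchedule p μ S) (hpack : IsPacked p μ S)
    (hp : ∀ j, 0 < p j) {α : Type*} [LinearOrder α] {σ : J → α} {i j : J} (hμ : μ i = μ j)
    (hij : S j < S i) (hσ : σ i < σ j) :
    ∃ i' j', μ i' = μ j' ∧ μ j' = μ j ∧ S j ≤ S j' ∧ S i' = S j' + p j' ∧ S i' ≤ S i ∧
      σ i' < σ j' := by
  obtain ⟨l, hl, hSl⟩ := hS.exists_start_eq_completion hpack hp hμ.symm hij
  have hli : S l ≤ S i := hSl ▸ hS.completion_le_start hμ.symm hij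
  have := hp j
  rcases lt_or_ge (σ l) (σ j) with hlj | hjl
  · exact ⟨l, j, hl, rfl, le_rfl, hSl, hli, hlj⟩
  · have hlt : S l < S i := hli.lt_of_ne fun h ↦ by
      rcases eq_or_ne l i with rfl | hne
      · exact (hσ.trans_le hjl).false
      · have := hS l i hne (hl.trans hμ.symm)
        have := hp l
        have := hp i
        omega
    obtain ⟨i', j', h₁, h₂, h₃, h₄⟩ :=
      hS.exists_adjacent_inversion hpack hp (hμ.trans hl.symm) hlt (hσ.trans_le hjl)
    exact ⟨i', j', h₁, h₂.trans hl, by omega, h₄⟩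
termination_by S i - S j

end Schedules

section LeftShift

variable [Fintype J] [DecidableEq M] {p S : J → ℕ} {μ : J → M}

/-- The start times when every machine processes its jobs without pause in increasing order of
`π`. -/
def packedStart {α : Type*} [LinearOrder α] (p : J → ℕ) (μ : J → M) (π : J → α) (j : J) : ℕ :=
  ∑ l with μ l = μ j ∧ π l < π j, p l

section PackedStart

variable {α : Type*} [LinearOrder α] {π : J → α}

theorem packedStart_add_le_sum (p : J → ℕ) {A : Finset J} {j : J} (hj : j ∈ A)
    (hA : ∀ l, μ l = μ j → π l < π j → l ∈ A) : packedStart p μ π j + p j ≤ ∑ l ∈ A, p l := by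
  classical
  rw [packedStart, add_comm, ← sum_insert (f := p) (by simp)]
  exact sum_le_sum_of_subset (by simpa [insert_subset_iff, hj, subset_iff] using hA)

theorem isPacked_packedStart (p : J → ℕ) (μ : J → M) (π : J → α) :
    IsPacked p μ (packedStart p μ π) :=
  fun _ ↦ packedStart_add_le_sum p (by simp) (by simp +contextual)

theorem isSchedule_packedStart (p : J → ℕ) (hπ : ∀ i j, i ≠ j → μ i = μ j → π i ≠ π j) :
    IsSchedule p μ (packedStart p μ π) := by
  have hle : ∀ i j, μ i = μ j → π i < π j →
      packedStart p μ π i + p i ≤ packedStart p μ π j := fun i j hμ hij ↦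
    packedStart_add_le_sum p (by simp [hμ, hij]) fun l hl hli ↦ by
      simpa using ⟨hl.trans hμ, hli.trans hij⟩
  intro i j hij hμ
  exact (hπ i j hij hμ).lt_or_gt.imp (hle i j hμ) (hle j i hμ.symm)

end PackedStart

theorem IsSchedule.packedStart_le (hS : IsSchedule p μ S) : packedStart p μ S ≤ S := fun j ↦ by
  have hle : packedStart p μ S j ≤ #(range (S j)) := by
    refine hS.sum_le_card (k := μ j) (by simp +contextual) fun l hl u hu ↦ ?_
    obtain ⟨hlj, hlt⟩ : μ l = μ j ∧ S l < S j := by simpa using hl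
    have := hS.completion_le_start hlj hlt
    simp only [mem_Ico, mem_range] at hu ⊢
    omega
  simpa using hle

theorem IsSchedule.isPacked_of_minimal (hS : IsSchedule p μ S) (hp : ∀ j, 0 < p j)
    (hmin : Minimal (fun S ↦ ∃ μ : J → M, IsSchedule p μ S) S) : IsPacked p μ S := by
  have hsched : IsSchedule p μ (packedStart p μ S) := by
    refine isSchedule_packedStart p fun i j hij hμ heq ↦ ?_
    have := hS i j hij hμ
    have := hp i
    have := hp j
    omega
  have heq : packedStart p μ S = S := hmin.eq_of_le ⟨μ, hsched⟩ hS.packedStart_le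
  have hpack := isPacked_packedStart p μ S
  rwa [heq] at hpack

theorem IsSchedule.update_load [DecidableEq J] (hS : IsSchedule p μ S) (hpack : IsPacked p μ S)
    (j : J) (k : M) :
    IsSchedule p (Function.update μ j k) (Function.update S j (load p μ k)) := by
  intro a b hab hμ
  by_cases ha : a = j
  · subst ha
    simp only [Function.update_self, Function.update_of_ne hab.symm] at hμ ⊢
    exact .inr (hμ ▸ hpack b)
  by_cases hb : b = j
  · subst hb
    simp only [Function.update_self, Function.update_of_ne hab] at hμ ⊢
    exact .inl (hμ ▸ hpack a)
  · simp only [Function.update_of_ne ha, Function.update_of_ne hb] at hμ ⊢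
    exact hS a b hab hμ

theorem IsPacked.exists_load_lt [Fintype M] (hpack : IsPacked p μ S) {j : J}
    (hj : horizon M p < S j + p j) : ∃ k, load p μ k < S j := by
  by_contra! hload
  have hcard : 0 < Fintype.card M := Fintype.card_pos_iff.mpr ⟨μ j⟩
  have hle_sup : p j ≤ univ.sup p := le_sup (f := p) (mem_univ j)
  have hsum : Fintype.card M * S j + p j ≤ ∑ l, p l :=
    calc Fintype.card M * S j + p j = ∑ k, (S j + if k = μ j then p j else 0) := by
          simp [sum_add_distrib]
      _ ≤ ∑ k, load p μ k := sum_le_sum fun k _ ↦ by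
          split_ifs with hk
          · exact hk ▸ hpack j
          · exact hload k
      _ = ∑ l, p l := sum_fiberwise univ μ p
  have hstart : S j ≤ (∑ l, p l - univ.sup p) ⌈/⌉ Fintype.card M + (univ.sup p - p j) := by
    refine Nat.le_of_mul_le_mul_left ?_ hcard
    calc Fintype.card M * S j ≤ ∑ l, p l - p j := Nat.le_sub_of_add_le hsum
      _ ≤ (∑ l, p l - univ.sup p) + (univ.sup p - p j) := tsub_le_tsub_add_tsub
      _ ≤ Fintype.card M * ((∑ l, p l - univ.sup p) ⌈/⌉ Fintype.card M) +
          Fintype.card M * (univ.sup p - p j) :=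
        add_le_add (le_smul_ceilDiv hcard) (Nat.le_mul_of_pos_left _ hcard)
      _ = _ := (mul_add _ _ _).symm
  rw [horizon] at hj
  omega

end LeftShift

section PackedSchedules

variable [Fintype J] [Fintype M] {p S : J → ℕ} {μ : J → M}

theorem IsSchedule.completion_le_horizon_of_minimal (hS : IsSchedule p μ S) (hp : ∀ j, 0 < p j)
    (hmin : Minimal (fun S ↦ ∃ μ : J → M, IsSchedule p μ S) S) (j : J) :
    S j + p j ≤ horizon M p := by
  classical
  have hpack := hS.isPacked_of_minimal hp hmin
  by_contra! hj
  obtain ⟨k, hk⟩ := hpack.exists_load_lt hj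
  exact hmin.not_lt ⟨_, hS.update_load hpack j k⟩ (update_lt_self_iff.mpr hk)

variable [DecidableEq M]

/-- Packed schedules in which every job completes within the horizon: the schedules to which the
search for an optimal one is restricted. -/
structure IsPackedSchedule (p : J → ℕ) (μ : J → M) (S : J → ℕ) : Prop where
  isSchedule : IsSchedule p μ S
  isPacked : IsPacked p μ S
  completion_le_horizon : ∀ j, S j + p j ≤ horizon M p

theorem IsSchedule.exists_isPackedSchedule_le (hS : IsSchedule p μ S) (hp : ∀ j, 0 < p j) :
    ∃ (μ' : J → M) (S' : J → ℕ), IsPackedSchedule p μ' S' ∧ S' ≤ S := by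
  obtain ⟨S', hle, hmin⟩ :=
    exists_minimal_le_of_wellFoundedLT (fun S ↦ ∃ μ : J → M, IsSchedule p μ S) S ⟨μ, hS⟩
  obtain ⟨μ', hS'⟩ := hmin.prop
  exact ⟨μ', S', ⟨hS', hS'.isPacked_of_minimal hp hmin,
    hS'.completion_le_horizon_of_minimal hp hmin⟩, hle⟩

theorem exists_isPackedSchedule [Nonempty M] (hp : ∀ j, 0 < p j) :
    ∃ (μ : J → M) (S : J → ℕ), IsPackedSchedule p μ S := by
  have hS : IsSchedule p (fun _ ↦ Classical.arbitrary M)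
      (packedStart p (fun _ ↦ Classical.arbitrary M) (Fintype.equivFin J)) :=
    isSchedule_packedStart p fun i j hij _ ↦ (Fintype.equivFin J).injective.ne hij
  obtain ⟨μ, S, h, -⟩ := hS.exists_isPackedSchedule_le hp
  exact ⟨μ, S, h⟩

theorem exists_isPackedSchedule_forall_le [Nonempty M] (hp : ∀ j, 0 < p j) {α : Type*}
    [LinearOrder α] (f : (J → ℕ) → α) :
    ∃ (μ : J → M) (S : J → ℕ), IsPackedSchedule p μ S ∧
      ∀ (μ' : J → M) (S' : J → ℕ), IsPackedSchedule p μ' S' → f S ≤ f S' := by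
  have hfin : {x : (J → M) × (J → ℕ) | IsPackedSchedule p x.1 x.2}.Finite := by
    classical
    refine (Set.finite_univ.prod (Set.finite_Iic fun _ ↦ horizon M p)).subset fun x hx ↦ ?_
    exact ⟨trivial, fun j ↦ le_of_add_le_left (hx.completion_le_horizon j)⟩
  obtain ⟨μ₀, S₀, h₀⟩ := exists_isPackedSchedule (M := M) hp
  obtain ⟨⟨μ, S⟩, hS, hmin⟩ := Set.exists_min_image _ (fun x ↦ f x.2) hfin ⟨(μ₀, S₀), h₀⟩
  exact ⟨μ, S, hS, fun μ' S' hS' ↦ hmin (μ', S') hS'⟩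

end PackedSchedules

section SwapAdjacent

variable {p S : J → ℕ} {μ : J → M} {i j : J}

/-- The start times after `j` and `i`, where `i` directly follows `j`, have exchanged places. -/
def swapStart [DecidableEq J] (p S : J → ℕ) (i j : J) : J → ℕ :=
  Function.update (Function.update S i (S j)) j (S j + p i)

theorem swapStart_left [DecidableEq J] (hij : i ≠ j) : swapStart p S i j i = S j := by
  simp [swapStart, hij]

theorem swapStart_right [DecidableEq J] : swapStart p S i j j = S j + p i := by
  simp [swapStart]

theorem swapStart_of_ne [DecidableEq J] {l : J} (hi : l ≠ i) (hj : l ≠ j) :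
    swapStart p S i j l = S l := by
  simp [swapStart, hi, hj]

theorem IsSchedule.swapStart_adjacent [DecidableEq J] (hS : IsSchedule p μ S) (hp : ∀ j, 0 < p j)
    (hij : i ≠ j) (hμ : μ i = μ j) (hadj : S i = S j + p j) :
    IsSchedule p μ (swapStart p S i j) := by
  have houtside : ∀ l, l ≠ i → l ≠ j → μ l = μ j →
      S l + p l ≤ S j ∨ S j + p i + p j ≤ S l := by
    intro l hli hlj hl
    have := hS l i hli (hl.trans hμ.symm)
    have := hS l j hlj hl
    have := hp l
    omega
  have hi := swapStart_left (p := p) (S := S) hij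
  have hj := swapStart_right (p := p) (S := S) (i := i) (j := j)
  have hne := fun l ↦ swapStart_of_ne (p := p) (S := S) (i := i) (j := j) (l := l)
  intro a b hab hμab
  have := hS a b hab hμab
  by_cases a = i <;> by_cases a = j <;> by_cases b = i <;> by_cases b = j <;> grind

theorem IsPackedSchedule.swapStart_adjacent [DecidableEq J] [Fintype J] [Fintype M] [DecidableEq M]
    (hS : IsPackedSchedule p μ S) (hp : ∀ j, 0 < p j) (hij : i ≠ j) (hμ : μ i = μ j)
    (hadj : S i = S j + p j) : IsPackedSchedule p μ (swapStart p S i j) := by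
  have hend : ∀ l, swapStart p S i j l + p l ≤ S l + p l ∨
      μ l = μ i ∧ swapStart p S i j l + p l ≤ S i + p i := by
    intro l
    rcases eq_or_ne l i with rfl | hli
    · exact .inl (by rw [swapStart_left hij]; omega)
    rcases eq_or_ne l j with rfl | hlj
    · exact .inr ⟨hμ.symm, by rw [swapStart_right]; omega⟩
    · exact .inl (swapStart_of_ne hli hlj ▸ le_rfl)
  refine ⟨hS.isSchedule.swapStart_adjacent hp hij hμ hadj, fun l ↦ ?_, fun l ↦ ?_⟩
  · rcases hend l with h | ⟨hl, h⟩
    · exact h.trans (hS.isPacked l)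
    · exact hl ▸ h.trans (hS.isPacked i)
  · rcases hend l with h | ⟨-, h⟩
    · exact h.trans (hS.completion_le_horizon l)
    · exact h.trans (hS.completion_le_horizon i)

theorem sum_swapStart_add [DecidableEq J] [Fintype J] {N : Type*} [AddCommMonoid N]
    (F : J → ℕ → N) (hij : i ≠ j) :
    ∑ l, F l (swapStart p S i j l) + (F i (S i) + F j (S j)) =
      ∑ l, F l (S l) + (F i (S j) + F j (S j + p i)) := by
  have hrest : ∑ l ∈ {i, j}ᶜ, F l (swapStart p S i j l) = ∑ l ∈ {i, j}ᶜ, F l (S l) := by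
    refine sum_congr rfl fun l hl ↦ ?_
    obtain ⟨hli, hlj⟩ : l ≠ i ∧ l ≠ j := by simpa using hl
    rw [swapStart_of_ne hli hlj]
  rw [← sum_add_sum_compl {i, j} fun l ↦ F l (swapStart p S i j l),
    ← sum_add_sum_compl {i, j} fun l ↦ F l (S l), hrest, sum_pair hij, sum_pair hij,
    swapStart_left hij, swapStart_right]
  ac_rfl

end SwapAdjacent

section Rules

variable {p w d σ : J → ℕ} {a b s : ℕ} {i j : J}

/-- Consistency of a ranking `σ` of the jobs with the WSPT/LPT ordering rules for the interval
`(a, b]`. In contrast to a permutation, `σ` may rank jobs equally. -/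
structure IsWSPTLPTConsistent (p w d : J → ℕ) (a b : ℕ) (σ : J → ℕ) : Prop where
  long_lt_short : ∀ i j, b - a ≤ p i → p j < b - a → σ i < σ j
  late_lt_onTime : ∀ i j, p i < b - a → p j < b - a → d i ≤ a → b ≤ d j → σ i < σ j
  onTime_lpt : ∀ i j, p i < b - a → p j < b - a → b ≤ d i → b ≤ d j → p j < p i → σ i < σ j
  late_wspt : ∀ i j, p i < b - a → p j < b - a → d i ≤ a → d j ≤ a → p i * w j < p j * w i →
    σ i < σ j
  late_tie_lpt : ∀ i j, p i < b - a → p j < b - a → d i ≤ a → d j ≤ a → p i * w j = p j * w i →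
    p j < p i → σ i < σ j

/-- The condition of Baptiste and Sadykov on pairs of jobs: `b ≤ a + p j` or
`a ≥ d i + ⌈w j * p i / w i⌉ - p i`, where `- p i` has been moved to the other side. -/
def ExchangeCondition (p w d : J → ℕ) (a b : ℕ) (σ : J → ℕ) : Prop :=
  ∀ i j, σ i < σ j → b ≤ a + p j ∨ d i + (w j * p i) ⌈/⌉ w i ≤ a + p i

/-- The weighted tardiness of `i` and `j` when `i` starts at time `s` and `j` directly follows. -/
def pairTardiness (p w d : J → ℕ) (s : ℕ) (i j : J) : ℕ :=
  w i * (s + p i - d i) + w j * (s + p i + p j - d j)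

theorem pairTardiness_lt_or_le_of_onTime (hwi : 0 < w i) (hpj : 0 < p j)
    (hrules : IsWSPTLPTConsistent p w d a b σ) (hdi : d i ≤ a ∨ b ≤ d i) (hdj : b ≤ d j)
    (hi : p i < b - a) (hj : p j < b - a) (hσ : σ i < σ j)
    (ha : a < s + p j) (hb : s + p j + p i ≤ b) :
    pairTardiness p w d s i j < pairTardiness p w d s j i ∨
      pairTardiness p w d s i j ≤ pairTardiness p w d s j i ∧ p j ≤ p i := by
  have hj_first : s + p j - d j = 0 := by omega
  have hj_last : s + p i + p j - d j = 0 := by omega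
  rw [pairTardiness, pairTardiness, hj_first, hj_last]
  rcases hdi with hdi | hdi
  · left
    have : w i * (s + p i - d i) < w i * (s + p j + p i - d i) :=
      Nat.mul_lt_mul_of_pos_left (by omega) hwi
    omega
  · have hi_first : s + p i - d i = 0 := by omega
    have hlpt : p j ≤ p i := not_lt.mp fun h ↦
      (hrules.onTime_lpt j i hj hi hdj hdi h).not_gt hσ
    exact .inr ⟨by simp [hi_first], hlpt⟩

theorem pairTardiness_lt_or_le_of_late (hwi : 0 < w i)
    (hrules : IsWSPTLPTConsistent p w d a b σ)
    (hceil : d i + (w j * p i) ⌈/⌉ w i ≤ a + p i) (hdi : d i ≤ a) (hdj : d j ≤ a)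
    (hi : p i < b - a) (hj : p j < b - a) (hσ : σ i < σ j) (ha : a < s + p j) :
    pairTardiness p w d s i j < pairTardiness p w d s j i ∨
      pairTardiness p w d s i j ≤ pairTardiness p w d s j i ∧ p j ≤ p i := by
  have hloss : w j * (s + p i + p j - d j) = w j * (s + p j - d j) + w j * p i := by
    rw [← mul_add]
    congr 1
    omega
  rw [pairTardiness, pairTardiness, hloss]
  rcases le_total (s + p i) (d i) with hearly | hlate
  · left
    have hgain : w j * p i < w i * (s + p j + p i - d i) :=
      calc w j * p i ≤ w i * ((w j * p i) ⌈/⌉ w i) := le_smul_ceilDiv hwi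
        _ < w i * (s + p j + p i - d i) := Nat.mul_lt_mul_of_pos_left (by omega) hwi
    simp only [Nat.sub_eq_zero_of_le hearly]
    omega
  · have hgain : w i * (s + p j + p i - d i) = w i * (s + p i - d i) + w i * p j := by
      rw [← mul_add]
      congr 1
      omega
    have hwspt : p i * w j ≤ p j * w i := not_lt.mp fun h ↦
      (hrules.late_wspt j i hj hi hdj hdi h).not_gt hσ
    rw [hgain, mul_comm (w j) (p i), mul_comm (w i) (p j)]
    rcases hwspt.lt_or_eq with hlt | heq
    · left
      omega
    · have hlpt : p j ≤ p i := not_lt.mp fun h ↦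
        (hrules.late_tie_lpt j i hj hi hdj hdi heq.symm h).not_gt hσ
      exact .inr ⟨by omega, hlpt⟩

theorem pairTardiness_lt_or_le (hwi : 0 < w i) (hpj : 0 < p j)
    (hrules : IsWSPTLPTConsistent p w d a b σ) (hcond : ExchangeCondition p w d a b σ)
    (hd : ∀ l, d l ≤ a ∨ b ≤ d l) (hσ : σ i < σ j) (ha : a < s + p j) (hb : s + p j + p i ≤ b) :
    pairTardiness p w d s i j < pairTardiness p w d s j i ∨
      pairTardiness p w d s i j ≤ pairTardiness p w d s j i ∧ p j ≤ p i := by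
  have hi : p i < b - a := by omega
  have hj : p j < b - a := not_le.mp fun h ↦ (hrules.long_lt_short j i h hi).not_gt hσ
  rcases hd j with hdj | hdj
  · have hdi : d i ≤ a := (hd i).resolve_right fun h ↦
      (hrules.late_lt_onTime j i hj hi hdj h).not_gt hσ
    have hceil := (hcond i j hσ).resolve_left (by omega)
    exact pairTardiness_lt_or_le_of_late hwi hrules hceil hdi hdj hi hj hσ ha
  · exact pairTardiness_lt_or_le_of_onTime hwi hpj hrules (hd i) hdj hi hj hσ ha hb

end Rules

section Optimality

variable [Fintype J] {p w d S : J → ℕ} {ρ : ℕ → J → ℕ}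

/-- The total weighted tardiness of the start times `S`. -/
def weightedTardiness (p w d S : J → ℕ) : ℕ :=
  ∑ j, w j * (S j + p j - d j)

theorem weightedTardiness_mono (p w d : J → ℕ) : Monotone (weightedTardiness p w d) :=
  fun _ _ hS ↦ sum_le_sum fun j _ ↦ by
    gcongr
    exact hS j

/-- The objective minimized by the schedule of the theorem: the weighted tardiness, with ties broken
towards a large sum of start times and then towards a large sum of completion times weighted by
rank. Here `ρ t` is the ranking of the jobs that complete at time `t`. -/
def lexObjective (p w d : J → ℕ) (ρ : ℕ → J → ℕ) (S : J → ℕ) : ℕ ×ₗ ℕᵒᵈ ×ₗ ℕᵒᵈ :=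
  toLex (weightedTardiness p w d S, toLex (OrderDual.toDual (∑ j, S j),
    OrderDual.toDual (∑ j, ρ (S j + p j) j * (S j + p j))))

theorem weightedTardiness_le_of_lexObjective_le {S' : J → ℕ}
    (h : lexObjective p w d ρ S ≤ lexObjective p w d ρ S') :
    weightedTardiness p w d S ≤ weightedTardiness p w d S' :=
  Prod.Lex.monotone_fst _ _ h

theorem lexObjective_swapStart_lt [DecidableEq J] {a b : ℕ} {σ : J → ℕ} {i j : J}
    (hpi : 0 < p i) (hpj : 0 < p j) (hwi : 0 < w i) (hρ : ∀ t ∈ Set.Ioc a b, ρ t = σ)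
    (hrules : IsWSPTLPTConsistent p w d a b σ) (hcond : ExchangeCondition p w d a b σ)
    (hd : ∀ l, d l ≤ a ∨ b ≤ d l) (hσ : σ i < σ j) (hadj : S i = S j + p j)
    (ha : a < S j + p j) (hb : S i + p i ≤ b) :
    lexObjective p w d ρ (swapStart p S i j) < lexObjective p w d ρ S := by
  have hij : i ≠ j := by rintro rfl; exact hσ.false
  have htard : weightedTardiness p w d (swapStart p S i j) + pairTardiness p w d (S j) j i =
      weightedTardiness p w d S + pairTardiness p w d (S j) i j := by
    have h := sum_swapStart_add (p := p) (S := S) (fun l t ↦ w l * (t + p l - d l)) hij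
    rw [hadj] at h
    simp only [weightedTardiness, pairTardiness]
    omega
  have hstart : ∑ l, swapStart p S i j l + p j = ∑ l, S l + p i := by
    have h := sum_swapStart_add (p := p) (S := S) (fun _ t ↦ t) hij
    omega
  have hrank : p i = p j → ∑ l, ρ (S l + p l) l * (S l + p l) <
      ∑ l, ρ (swapStart p S i j l + p l) l * (swapStart p S i j l + p l) := by
    intro hpij
    have h := sum_swapStart_add (p := p) (S := S) (fun l t ↦ ρ (t + p l) l * (t + p l)) hij
    simp only [hadj, ← hpij] at h ha hb
    rw [hρ (S j + p i + p i) ⟨by omega, hb⟩, hρ (S j + p i) ⟨ha, by omega⟩] at h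
    nlinarith [Nat.mul_lt_mul_of_pos_right hσ hpi]
  have hpair := pairTardiness_lt_or_le hwi hpj hrules hcond hd hσ ha (hadj ▸ hb)
  simp only [lexObjective, Prod.Lex.toLex_lt_toLex', OrderDual.toDual_le_toDual,
    OrderDual.toDual_lt_toDual, OrderDual.toDual_inj]
  exact ⟨by omega, fun htard_eq ↦ ⟨by omega, fun hstart_eq ↦ hrank (by omega)⟩⟩

theorem start_lt_of_forall_lexObjective_le [Fintype M] [DecidableEq M] {μ : J → M} {a b : ℕ}
    {σ : J → ℕ} (hp : ∀ l, 0 < p l) (hw : ∀ l, 0 < w l) (hS : IsPackedSchedule p μ S)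
    (hmin : ∀ S', IsPackedSchedule p μ S' → lexObjective p w d ρ S ≤ lexObjective p w d ρ S')
    (hρ : ∀ t ∈ Set.Ioc a b, ρ t = σ) (hrules : IsWSPTLPTConsistent p w d a b σ)
    (hcond : ExchangeCondition p w d a b σ) (hd : ∀ l, d l ≤ a ∨ b ≤ d l) {i j : J}
    (hμ : μ i = μ j) (hi : S i + p i ≤ b) (hj : a < S j + p j) (hσ : σ i < σ j) :
    S i < S j := by
  classical
  by_contra! hji
  have hne : i ≠ j := by rintro rfl; exact hσ.false
  have hlt : S j < S i := by
    have := hS.isSchedule i j hne hμ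
    have := hp i
    have := hp j
    omega
  obtain ⟨i', j', hμ', hj', hstart, hadj, hend, hσ'⟩ :=
    hS.isSchedule.exists_adjacent_inversion hS.isPacked hp hμ hlt hσ
  have hne' : i' ≠ j' := by rintro rfl; exact hσ'.false
  have ha : a < S j' + p j' :=
    hj.trans_le (hS.isSchedule.completion_le_completion (hp j') hj'.symm hstart)
  have hb : S i' + p i' ≤ b :=
    (hS.isSchedule.completion_le_completion (hp i) (hμ'.trans (hj'.trans hμ.symm)) hend).trans hi
  exact (hmin _ (hS.swapStart_adjacent hp hne' hμ' hadj)).not_gt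
    (lexObjective_swapStart_lt (hp i') (hp j') (hw i') hρ hrules hcond hd hσ' hadj ha hb)

end Optimality

section Intervals

variable {R α β : Type*}

theorem exists_forall_mem_eq_of_pairwise_disjoint [Nonempty β] {s : R → Set α}
    (hs : Pairwise (Function.onFun Disjoint s)) (f : R → β) :
    ∃ g : α → β, ∀ r, ∀ x ∈ s r, g x = f r := by
  have hfac : (fun x : Σ r, s r ↦ f x.1).FactorsThrough (fun x ↦ (x.2 : α)) := by
    rintro ⟨r, x, hx⟩ ⟨r', _, hx'⟩ rfl
    exact congrArg f (hs.eq (Set.not_disjoint_iff.mpr ⟨x, hx, hx'⟩))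
  exact ⟨Function.extend _ _ (Function.const α (Classical.arbitrary β)),
    fun r x hx ↦ hfac.extend_apply _ ⟨r, x, hx⟩⟩

variable {q : ℕ} [Preorder α] {e : Fin (q + 1) → α}

theorem pairwise_disjoint_Ioc_castSucc_succ (he : Monotone e) :
    Pairwise (Function.onFun Disjoint fun r : Fin q ↦ Set.Ioc (e r.castSucc) (e r.succ)) := by
  intro r s hrs
  simpa [Function.onFun] using
    he.pairwise_disjoint_on_Ioc_succ ((Fin.castSucc_injective q).ne hrs)

theorem le_castSucc_or_succ_le (he : Monotone e) (r s : Fin q) :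
    e s.succ ≤ e r.castSucc ∨ e r.succ ≤ e s.succ :=
  (lt_or_ge s r).imp (fun h ↦ he (Fin.succ_le_castSucc_iff.mpr h))
    fun h ↦ he (Fin.succ_le_succ_iff.mpr h)

end Intervals

theorem baptiste_sadykov_appropriate_partition_general {R : Type*} [Fintype J] [Fintype M]
    [Nonempty M] [DecidableEq M] {p w d : J → ℕ} (hp : ∀ j, 0 < p j) (hw : ∀ j, 0 < w j)
    {a b : R → ℕ} {σ : R → J → ℕ}
    (hdisj : Pairwise (Function.onFun Disjoint fun r ↦ Set.Ioc (a r) (b r)))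
    (hd : ∀ r j, d j ≤ a r ∨ b r ≤ d j)
    (hrules : ∀ r, IsWSPTLPTConsistent p w d (a r) (b r) (σ r))
    (hcond : ∀ r, ExchangeCondition p w d (a r) (b r) (σ r)) :
    ∃ (μ : J → M) (S : J → ℕ), IsSchedule p μ S ∧ HasNoIdleTime p μ S ∧
      (∀ j, S j + p j ≤ horizon M p) ∧
      (∀ (μ' : J → M) (S' : J → ℕ), IsSchedule p μ' S' →
        weightedTardiness p w d S ≤ weightedTardiness p w d S') ∧
      ∀ r i j, μ i = μ j → S i + p i ∈ Set.Ioc (a r) (b r) → S j + p j ∈ Set.Ioc (a r) (b r) →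
        σ r i < σ r j → S i < S j := by
  obtain ⟨ρ, hρ⟩ := exists_forall_mem_eq_of_pairwise_disjoint hdisj σ
  obtain ⟨μ, S, hS, hmin⟩ :=
    exists_isPackedSchedule_forall_le (M := M) hp (lexObjective p w d ρ)
  refine ⟨μ, S, hS.isSchedule, hS.isSchedule.hasNoIdleTime hS.isPacked, hS.completion_le_horizon,
    fun μ' S' hS' ↦ ?_, fun r i j hμ hi hj hσ ↦ ?_⟩
  · obtain ⟨μ'', S'', hS'', hle⟩ := hS'.exists_isPackedSchedule_le hp
    exact (weightedTardiness_le_of_lexObjective_le (hmin μ'' S'' hS'')).trans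
      (weightedTardiness_mono p w d hle)
  · exact start_lt_of_forall_lexObjective_le hp hw hS (hmin μ) (hρ r) (hrules r) (hcond r) (hd r)
      hμ hi.2 hj.1 hσ

/-- Theorem of Baptiste and Sadykov.  Let `0 = e₀ < e₁ < … < e_q = T` define a
partition of the time horizon `(0, T]` into intervals `I_r = (e_{r-1}, e_r]` that is
based on due dates, and let `σ_r` be permutations consistent with the WSPT/LPT
ordering rules.  If for each interval `r` and each pair `i, j` with
`σ_r i < σ_r j` either `e_r ≤ e_{r-1} + pⱼ` or
`e_{r-1} ≥ dᵢ + ⌈wⱼ·pᵢ/wᵢ⌉ − pᵢ` holds, then the partition is appropriate: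
there is an optimal idle-time-free schedule with all completion times at most `T`
such that within each interval, on each machine, jobs are sequenced according to
`σ_r`. -/
theorem baptiste_sadykov_appropriate_partition
    (n m : ℕ) (hm : 1 ≤ m) (p w d : Fin n → ℕ)
    (hp : ∀ j, 0 < p j) (hw : ∀ j, 0 < w j)
    (T : ℕ) (hT : T = ((∑ j, p j) - univ.sup p + m - 1) / m + univ.sup p)
    (q : ℕ) (e : Fin (q + 1) → ℕ) (σ : Fin q → Equiv.Perm (Fin n))
    (he0 : e 0 = 0) (heT : e (Fin.last q) = T) (hmono : StrictMono e)
    -- the partition is based on due dates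
    (hdue : ∀ j, ∃ r : Fin q, d j = e r.succ)
    -- σ is consistent with the WSPT/LPT ordering rules:
    -- long jobs precede short jobs
    (hlong : ∀ (r : Fin q) (i j : Fin n),
      e r.succ - e r.castSucc ≤ p i → p j < e r.succ - e r.castSucc →
      σ r i < σ r j)
    -- a short late job precedes a short on-time job
    (hlate_ontime : ∀ (r : Fin q) (i j : Fin n),
      p i < e r.succ - e r.castSucc → p j < e r.succ - e r.castSucc →
      d i ≤ e r.castSucc → e r.succ ≤ d j → σ r i < σ r j)
    -- short on-time jobs follow the LPT rule
    (hontime_lpt : ∀ (r : Fin q) (i j : Fin n),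
      p i < e r.succ - e r.castSucc → p j < e r.succ - e r.castSucc →
      e r.succ ≤ d i → e r.succ ≤ d j → p j < p i → σ r i < σ r j)
    -- short late jobs follow the WSPT rule (pᵢ/wᵢ < pⱼ/wⱼ, cross-multiplied)
    (hlate_wspt : ∀ (r : Fin q) (i j : Fin n),
      p i < e r.succ - e r.castSucc → p j < e r.succ - e r.castSucc →
      d i ≤ e r.castSucc → d j ≤ e r.castSucc →
      p i * w j < p j * w i → σ r i < σ r j)
    -- ties among short late jobs are broken by LPT
    (hlate_tie : ∀ (r : Fin q) (i j : Fin n),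
      p i < e r.succ - e r.castSucc → p j < e r.succ - e r.castSucc →
      d i ≤ e r.castSucc → d j ≤ e r.castSucc →
      p i * w j = p j * w i → p j < p i → σ r i < σ r j)
    -- the conditions of the theorem: (1) e_r ≤ e_{r-1} + pⱼ, or
    -- (2) e_{r-1} ≥ dᵢ + ⌈wⱼ·pᵢ/wᵢ⌉ − pᵢ (rearranged in ℕ)
    (hcond : ∀ (r : Fin q) (i j : Fin n), σ r i < σ r j →
      e r.succ ≤ e r.castSucc + p j ∨
      d i + (w j * p i + w i - 1) / w i ≤ e r.castSucc + p i) :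
    ∃ (μ : Fin n → Fin m) (S : Fin n → ℕ),
      -- (μ, S) is a schedule
      (∀ i j, i ≠ j → μ i = μ j → S i + p i ≤ S j ∨ S j + p j ≤ S i) ∧
      -- no idle time
      (∀ k : Fin m, ∀ u, u < ∑ j ∈ univ.filter (fun j => μ j = k), p j →
        ∃ j, μ j = k ∧ S j ≤ u ∧ u < S j + p j) ∧
      -- all completion times at most T
      (∀ j, S j + p j ≤ T) ∧
      -- optimality for total weighted tardiness
      (∀ (μ' : Fin n → Fin m) (S' : Fin n → ℕ),
        (∀ i j, i ≠ j → μ' i = μ' j → S' i + p i ≤ S' j ∨ S' j + p j ≤ S' i) →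
        ∑ j, w j * (S j + p j - d j) ≤ ∑ j, w j * (S' j + p j - d j)) ∧
      -- jobs completing in the same interval on the same machine follow σ_r
      (∀ (r : Fin q) (i j : Fin n), i ≠ j → μ i = μ j →
        e r.castSucc < S i + p i → S i + p i ≤ e r.succ →
        e r.castSucc < S j + p j → S j + p j ≤ e r.succ →
        σ r i < σ r j → S i < S j) := by
  have : NeZero m := ⟨by omega⟩
  have hd : ∀ (r : Fin q) j, d j ≤ e r.castSucc ∨ e r.succ ≤ d j := fun r j ↦ by
    obtain ⟨s, hs⟩ := hdue j
    exact hs ▸ le_castSucc_or_succ_le hmono.monotone r s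
  obtain ⟨μ, S, hS, hidle, hend, hopt, horder⟩ :=
    baptiste_sadykov_appropriate_partition_general (M := Fin m) (σ := fun r j ↦ (σ r j : ℕ)) hp hw
      (pairwise_disjoint_Ioc_castSucc_succ hmono.monotone) hd
      (fun r ↦ ⟨hlong r, hlate_ontime r, hontime_lpt r, hlate_wspt r, hlate_tie r⟩) hcond
  rw [horizon, Fintype.card_fin] at hend
  exact ⟨μ, S, hS, hidle, hT ▸ hend, hopt, fun r i j _ hμ hi hi' hj hj' ↦
    horder r i j hμ ⟨hi, hi'⟩ ⟨hj, hj'⟩⟩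
end

section
/- (Proposition: the BDD-based formulation BDDF dominates the TIF.) Let B = (N, A) be a BDD-style DAG as described in the context, whose high edges e ∈ A¹ carry a job label p_B(e) ∈ J, a start period q_B(e) ∈ {1,…,T − p_{p_B(e)} + 1} and cost c_e = c̃_{p_B(e), q_B(e)}, and assume that along every directed path from the root r to the terminal 1 the occupied period sets {q_B(e), …, q_B(e) + p_{p_B(e)} − 1} of the high edges on the path are pairwise disjoint. Then every feasible solution x of the LP relaxation of the BDDF yields, via ȳ_{jt} = Σ_{e ∈ A¹ : p_B(e) = j, q_B(e) = t} x_e, a feasible solution ȳ of the LP relaxation of the TIF with the same objective value. Consequently, the optimal value of the LP relaxation of the BDDF is at least the optimal value of the LP relaxation of the TIF. -/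
open Finset

/-!
The starts that occupy a fixed period label a set `S` of edges that no root-to-terminal path meets
twice. In an acyclic network every edge carrying positive flow lies on such a path, so the indicator
of the nodes reachable from the heads of the flow-carrying edges of `S` is a potential which never
drops along an edge, vanishes at the root, and rises by one across each of those edges. By weak
duality the flow through `S` is at most the flow value `m`, which is the capacity constraint of the
TIF for that period. The other assertions only regroup sums over edges by label.
-/

open Relation (ReflTransGen TransGen)

theorem exists_isChain_cons_of_reflTransGen {α : Type*} {r : α → α → Prop} {a b : α} {l : List α}
    (hab : ReflTransGen r a b) (hl : (b :: l).IsChain r) :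
    ∃ l', (a :: l').IsChain r ∧ b :: l <:+ a :: l' := by
  induction hab using ReflTransGen.head_induction_on with
  | refl => exact ⟨l, hl, List.suffix_rfl⟩
  | @head a c hac _ ih =>
    obtain ⟨l', hchain, hsuffix⟩ := ih
    exact ⟨c :: l', hchain.cons_cons hac, hsuffix.trans (List.suffix_cons a _)⟩

section Network

variable {V E R : Type*} {tl hd : E → V} {s t : V} {x : E → R}

/-- The relation between consecutive edges of a walk in the directed multigraph whose edge `e` goes
from `tl e` to `hd e`. -/
def Precedes (tl hd : E → V) (a b : E) : Prop := hd a = tl b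

/-- A directed path from `s` to `t`, encoded as its nonempty list of edges. -/
def IsDirectedPath (tl hd : E → V) (s t : V) (es : List E) : Prop :=
  ∃ h : es ≠ [], es.IsChain (Precedes tl hd) ∧ tl (es.head h) = s ∧ hd (es.getLast h) = t

/-- An acyclic directed multigraph in which no edge enters the source `s` or leaves the sink `t`.
Acyclicity says that no walk returns to its first edge. -/
structure IsAcyclicNetwork (tl hd : E → V) (s t : V) : Prop where
  acyclic : ∀ e, ¬ TransGen (Precedes tl hd) e e
  hd_ne_source : ∀ e, hd e ≠ s
  tl_ne_sink : ∀ e, tl e ≠ t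

/-- A nonnegative flow from `s` to `t`. It is conserved at all other nodes; its value is the inflow
of `t`. -/
structure IsFlow [Fintype E] [DecidableEq V] [AddCommMonoid R] [PartialOrder R]
    (tl hd : E → V) (s t : V) (x : E → R) : Prop where
  nonneg : ∀ e, 0 ≤ x e
  conservation : ∀ v, v ≠ s → v ≠ t → ∑ e with tl e = v, x e = ∑ e with hd e = v, x e

theorem precedes_swap : Precedes hd tl = Function.swap (Precedes tl hd) := by
  ext a b
  exact eq_comm

theorem not_transGen_precedes_self_of_rank {α : Type*} [Preorder α] {rank : V → α}
    (hrank : ∀ e, rank (tl e) < rank (hd e)) (e : E) : ¬ TransGen (Precedes tl hd) e e := by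
  intro hcycle
  have hlt : TransGen (· < ·) (rank (tl e)) (rank (tl e)) :=
    hcycle.lift (fun a => rank (tl a)) fun a b (hab : hd a = tl b) =>
      (hrank a).trans_eq (congrArg rank hab)
  rw [Relation.transGen_eq_self] at hlt
  exact lt_irrefl _ hlt

namespace IsAcyclicNetwork

theorem reverse (hN : IsAcyclicNetwork tl hd s t) : IsAcyclicNetwork hd tl t s where
  acyclic e := by
    rw [precedes_swap, Relation.transGen_swap]
    exact hN.acyclic e
  hd_ne_source := hN.tl_ne_sink
  tl_ne_sink := hN.hd_ne_source

theorem wellFounded_transGen [Finite E] (hN : IsAcyclicNetwork tl hd s t) :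
    WellFounded (TransGen (Precedes tl hd)) :=
  have : Std.Irrefl (TransGen (Precedes tl hd)) := ⟨hN.acyclic⟩
  Finite.wellFounded_of_trans_of_irrefl _

end IsAcyclicNetwork

theorem sum_potential_sub_mul [Fintype E] [DecidableEq V] [NonUnitalNonAssocRing R] {W : Finset V}
    (hhd : ∀ e, hd e ∈ W) (htl : ∀ e, tl e ∈ W) (π : V → R) (x : E → R) :
    ∑ e, (π (hd e) - π (tl e)) * x e =
      ∑ v ∈ W, π v * (∑ e with hd e = v, x e - ∑ e with tl e = v, x e) := by
  have hfiber {g : E → V} (hg : ∀ e, g e ∈ W) :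
      ∑ v ∈ W, π v * ∑ e with g e = v, x e = ∑ e, π (g e) * x e := by
    rw [← sum_fiberwise_of_maps_to fun e _ => hg e]
    refine sum_congr rfl fun v _ => ?_
    rw [mul_sum]
    exact sum_congr rfl fun e he => by rw [(mem_filter.1 he).2]
  simp only [sub_mul, mul_sub, sum_sub_distrib, hfiber hhd, hfiber htl]

namespace IsFlow

variable [Fintype E] [DecidableEq V]

section AddCommMonoid

variable [AddCommMonoid R] [PartialOrder R]

theorem reverse (hx : IsFlow tl hd s t x) : IsFlow hd tl t s x where
  nonneg := hx.nonneg
  conservation v hvt hvs := (hx.conservation v hvs hvt).symm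

variable [IsOrderedAddMonoid R]

theorem exists_pos_precedes (hx : IsFlow tl hd s t x) (hN : IsAcyclicNetwork tl hd s t) {b : E}
    (hb : 0 < x b) (hbs : tl b ≠ s) : ∃ a, 0 < x a ∧ Precedes tl hd a b := by
  have hout : 0 < ∑ e with tl e = tl b, x e :=
    hb.trans_le (single_le_sum (f := x) (fun e _ => hx.nonneg e) (by simp))
  rw [hx.conservation _ hbs (hN.tl_ne_sink b)] at hout
  obtain ⟨a, ha, hxa⟩ := exists_ne_zero_of_sum_ne_zero hout.ne'
  exact ⟨a, (hx.nonneg a).lt_of_ne' hxa, (mem_filter.1 ha).2⟩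

theorem exists_walk_from_source (hx : IsFlow tl hd s t x) (hN : IsAcyclicNetwork tl hd s t) {a : E}
    (ha : 0 < x a) : ∃ e, tl e = s ∧ ReflTransGen (Precedes tl hd) e a := by
  induction a using hN.wellFounded_transGen.induction with
  | _ a ih =>
    by_cases has : tl a = s
    · exact ⟨a, has, .refl⟩
    · obtain ⟨b, hb, hba⟩ := hx.exists_pos_precedes hN ha has
      obtain ⟨e, hes, heb⟩ := ih b (.single hba) hb
      exact ⟨e, hes, heb.tail hba⟩

theorem exists_walk_to_sink (hx : IsFlow tl hd s t x) (hN : IsAcyclicNetwork tl hd s t) {a : E}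
    (ha : 0 < x a) : ∃ e, hd e = t ∧ ReflTransGen (Precedes tl hd) a e := by
  obtain ⟨e, het, hwalk⟩ := hx.reverse.exists_walk_from_source hN.reverse ha
  rw [precedes_swap, Relation.reflTransGen_swap] at hwalk
  exact ⟨e, het, hwalk⟩

theorem exists_isDirectedPath_through (hx : IsFlow tl hd s t x) (hN : IsAcyclicNetwork tl hd s t)
    {a b : E} (ha : 0 < x a) (hb : 0 < x b) (hab : ReflTransGen (Precedes tl hd) a b) :
    ∃ es, IsDirectedPath tl hd s t es ∧ a ∈ es ∧ b ∈ es := by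
  obtain ⟨e, hes, hea⟩ := hx.exists_walk_from_source hN ha
  obtain ⟨f, hft, hbf⟩ := hx.exists_walk_to_sink hN hb
  obtain ⟨l₁, hl₁, hf⟩ := exists_isChain_cons_of_reflTransGen hbf (List.isChain_singleton f)
  obtain ⟨l₂, hl₂, hb'⟩ := exists_isChain_cons_of_reflTransGen hab hl₁
  obtain ⟨l₃, hl₃, ha'⟩ := exists_isChain_cons_of_reflTransGen hea hl₂
  have hlast : f = (e :: l₃).getLast (by simp) :=
    ((hf.trans hb').trans ha').getLast (by simp)
  exact ⟨e :: l₃, ⟨by simp, hl₃, hes, by rw [← hlast, hft]⟩, ha'.mem (by simp),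
    (hb'.trans ha').mem (by simp)⟩

end AddCommMonoid

variable [Ring R] [PartialOrder R]

theorem sum_potential_sub_mul_eq (hx : IsFlow tl hd s t x) (hN : IsAcyclicNetwork tl hd s t)
    {π : V → R} (hs : π s = 0) :
    ∑ e, (π (hd e) - π (tl e)) * x e = π t * ∑ e with hd e = t, x e := by
  have hsink : ∑ e with tl e = t, x e = 0 := by
    simp [filter_false_of_mem fun e _ => hN.tl_ne_sink e]
  let W : Finset V := insert t (univ.image hd ∪ univ.image tl)
  rw [sum_potential_sub_mul (W := W) (by simp [W]) (by simp [W]),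
    sum_eq_single_of_mem t (mem_insert_self ..), hsink, sub_zero]
  intro v _ hvt
  obtain rfl | hvs := eq_or_ne v s
  · rw [hs, zero_mul]
  · rw [hx.conservation v hvs hvt, sub_self, mul_zero]

variable [IsOrderedRing R]

theorem sum_le_of_potential (hx : IsFlow tl hd s t x) (hN : IsAcyclicNetwork tl hd s t)
    {S : Finset E} {π : V → R} (hs : π s = 0) (ht : π t ≤ 1)
    (hmono : ∀ e, π (tl e) ≤ π (hd e)) (hS : ∀ e ∈ S, 0 < x e → π (tl e) + 1 ≤ π (hd e)) :
    ∑ e ∈ S, x e ≤ ∑ e with hd e = t, x e := by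
  have hrise (e : E) (he : e ∈ S) : x e ≤ (π (hd e) - π (tl e)) * x e := by
    obtain hxe | hxe := (hx.nonneg e).eq_or_lt
    · simp [← hxe]
    · exact le_mul_of_one_le_left hxe.le (le_sub_iff_add_le'.2 (hS e he hxe))
  calc ∑ e ∈ S, x e
      ≤ ∑ e ∈ S, (π (hd e) - π (tl e)) * x e := sum_le_sum hrise
    _ ≤ ∑ e, (π (hd e) - π (tl e)) * x e :=
      sum_le_univ_sum_of_nonneg fun e => mul_nonneg (sub_nonneg.2 (hmono e)) (hx.nonneg e)
    _ = π t * ∑ e with hd e = t, x e := hx.sum_potential_sub_mul_eq hN hs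
    _ ≤ ∑ e with hd e = t, x e := mul_le_of_le_one_left (sum_nonneg fun e _ => hx.nonneg e) ht

theorem sum_le_of_paths_meet_at_most_once (hx : IsFlow tl hd s t x)
    (hN : IsAcyclicNetwork tl hd s t) {S : Finset E}
    (hS : ∀ es, IsDirectedPath tl hd s t es → ∀ a ∈ es, ∀ b ∈ es, a ∈ S → b ∈ S → a = b) :
    ∑ e ∈ S, x e ≤ ∑ e with hd e = t, x e := by
  classical
  let Downstream (v : V) : Prop :=
    ∃ a ∈ S, 0 < x a ∧ ∃ e, ReflTransGen (Precedes tl hd) a e ∧ hd e = v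
  have downstream_hd (e : E) : Downstream (tl e) → Downstream (hd e) := by
    rintro ⟨a, ha, hxa, f, haf, hfe⟩
    exact ⟨a, ha, hxa, e, haf.tail hfe, rfl⟩
  have not_downstream_source : ¬ Downstream s := by
    rintro ⟨-, -, -, e, -, he⟩
    exact hN.hd_ne_source e he
  have not_downstream_tl (b : E) (hb : b ∈ S) (hxb : 0 < x b) : ¬ Downstream (tl b) := by
    rintro ⟨a, ha, hxa, e, hae, heb⟩
    have hab : TransGen (Precedes tl hd) a b := .tail' hae heb
    obtain ⟨es, hes, haes, hbes⟩ := hx.exists_isDirectedPath_through hN hxa hxb hab.to_reflTransGen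
    obtain rfl := hS es hes a haes b hbes ha hb
    exact hN.acyclic a hab
  refine hx.sum_le_of_potential hN (π := fun v => if Downstream v then 1 else 0) ?_ ?_ ?_ ?_
  · exact if_neg not_downstream_source
  · split_ifs <;> simp
  · intro e
    split_ifs with htl hhd hhd
    exacts [le_rfl, absurd (downstream_hd e htl) hhd, zero_le_one, le_rfl]
  · intro b hb hxb
    have hhd : Downstream (hd b) := ⟨b, hb, hxb, b, .refl, rfl⟩
    simp [not_downstream_tl b hb hxb, hhd]

end IsFlow

end Network

section Projection

variable {E J τ R : Type*} [Fintype E] [DecidableEq J] [DecidableEq τ]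
  (high : E → Prop) [DecidablePred high] (job : E → J) (q : E → τ)

/-- The time-indexed solution `ȳ` induced by an edge weighting `x`: the total weight of the high
edges that start job `j` at `t`. -/
def projectedSolution [AddCommMonoid R] (x : E → R) (j : J) (t : τ) : R :=
  ∑ e with high e ∧ job e = j ∧ q e = t, x e

variable [NonUnitalNonAssocSemiring R]

theorem sum_mul_projectedSolution (x : E → R) (j : J) (S : Finset τ) (g : τ → R) :
    ∑ t ∈ S, g t * projectedSolution high job q x j t =
      ∑ e with high e ∧ job e = j ∧ q e ∈ S, g (q e) * x e := by
  have hlabel : Set.MapsTo q ↑({e | high e ∧ job e = j ∧ q e ∈ S} : Finset E) ↑S := fun e he =>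
    (mem_filter.1 he).2.2.2
  rw [← sum_fiberwise_of_maps_to hlabel]
  refine sum_congr rfl fun t ht => ?_
  rw [projectedSolution, mul_sum, filter_filter]
  refine sum_congr (filter_congr fun e _ => ?_) fun e he => ?_
  · grind
  · rw [(mem_filter.1 he).2.2]

theorem sum_sum_mul_projectedSolution [Fintype J] (x : E → R) (S : J → Finset τ) (g : J → τ → R) :
    ∑ j, ∑ t ∈ S j, g j t * projectedSolution high job q x j t =
      ∑ e with high e ∧ q e ∈ S (job e), g (job e) (q e) * x e := by
  rw [← sum_fiberwise _ job]
  refine sum_congr rfl fun j _ => ?_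
  rw [sum_mul_projectedSolution, filter_filter]
  refine sum_congr (filter_congr fun e _ => ?_) fun e he => ?_
  · grind
  · rw [(mem_filter.1 he).2.2]

end Projection

/-- The periods are replaced by arbitrary resources `r`; taking for `S j` the starts of job `j` that
occupy period `r` gives the capacity constraint of the TIF. -/
theorem bddf_dominates_tif_general {V E J τ ρ R : Type*} [Fintype E] [Fintype J]
    [DecidableEq V] [DecidableEq J] [DecidableEq τ] [Ring R] [PartialOrder R] [IsOrderedRing R]
    {tl hd : E → V} {root one : V} (hN : IsAcyclicNetwork tl hd root one)
    {high : E → Prop} [DecidablePred high] {job : E → J} {q : E → τ}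
    {starts : J → Finset τ} (hq : ∀ e, high e → q e ∈ starts (job e))
    {cost : J → τ → R} {c : E → R} (hc : ∀ e, high e → c e = cost (job e) (q e))
    {occupied : J → τ → Finset ρ}
    (hdisj : ∀ es, IsDirectedPath tl hd root one es → ∀ e ∈ es, ∀ f ∈ es, e ≠ f →
      high e → high f → Disjoint (occupied (job e) (q e)) (occupied (job f) (q f)))
    {x : E → R} (hx : IsFlow tl hd root one x)
    (hassign : ∀ j, ∑ e with high e ∧ job e = j, x e = 1) :
    (∀ j t, 0 ≤ projectedSolution high job q x j t) ∧
    (∀ j, ∑ t ∈ starts j, projectedSolution high job q x j t = 1) ∧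
    (∀ r, ∀ S : J → Finset τ, (∀ j, ∀ t ∈ S j, r ∈ occupied j t) →
      ∑ j, ∑ t ∈ S j, projectedSolution high job q x j t ≤ ∑ e with hd e = one, x e) ∧
    ∑ j, ∑ t ∈ starts j, cost j t * projectedSolution high job q x j t =
      ∑ e with high e, c e * x e := by
  refine ⟨fun j t => sum_nonneg fun e _ => hx.nonneg e, fun j => ?_, fun r S hS => ?_, ?_⟩
  · have hregroup : ∑ t ∈ starts j, projectedSolution high job q x j t =
        ∑ e with high e ∧ job e = j ∧ q e ∈ starts j, x e := by
      simpa only [one_mul] using sum_mul_projectedSolution high job q x j (starts j) fun _ => 1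
    rw [hregroup, ← hassign j]
    exact sum_congr (filter_congr fun e _ => by grind) fun _ _ => rfl
  · have hregroup : ∑ j, ∑ t ∈ S j, projectedSolution high job q x j t =
        ∑ e with high e ∧ q e ∈ S (job e), x e := by
      simpa only [one_mul] using sum_sum_mul_projectedSolution high job q x S fun _ _ => 1
    rw [hregroup]
    refine hx.sum_le_of_paths_meet_at_most_once hN fun es hes a ha b hb haS hbS => ?_
    by_contra hab
    obtain ⟨-, haHigh, haS⟩ := mem_filter.1 haS
    obtain ⟨-, hbHigh, hbS⟩ := mem_filter.1 hbS
    exact disjoint_left.1 (hdisj es hes a ha b hb hab haHigh hbHigh) (hS _ _ haS) (hS _ _ hbS)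
  · rw [sum_sum_mul_projectedSolution]
    exact sum_congr (filter_congr fun e _ => and_iff_left_of_imp (hq e)) fun e he => by
      rw [hc e (mem_filter.1 he).2]

/-- The BDD-based formulation (BDDF) dominates the time-indexed formulation (TIF).
`B = (V, E)` is a BDD-style DAG (every node but the terminal `one` has exactly one
high and one low outgoing edge, `one` has no outgoing edges, `root` is the only node
without incoming edges).  High edges `e` carry a job label `job e`, a start period
`qB e ∈ {1, …, T − p (job e) + 1}` and cost `c e = ctil (job e) (qB e)`, and along
every directed root-to-terminal path the occupied period sets
`{qB e, …, qB e + p (job e) − 1}` of its high edges are pairwise disjoint.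
Then every feasible solution `x` of the LP relaxation of the BDDF yields, via
`y j t = Σ_{e high, job e = j, qB e = t} x e`, a feasible solution of the LP
relaxation of the TIF with the same objective value; consequently the optimal LP
value of the BDDF is at least that of the TIF. -/
theorem bddf_dominates_tif
    {V E : Type} [Fintype V] [Fintype E] [DecidableEq V] [DecidableEq E]
    (n T m : ℕ) (hm : 1 ≤ m)
    (p : Fin n → ℕ) (hp : ∀ j, 0 < p j) (hpT : ∀ j, p j ≤ T)
    (ctil : Fin n → ℕ → ℝ)
    (tl hd : E → V) (root one : V) (hro : root ≠ one)
    (isHigh : E → Bool) (job : E → Fin n) (qB : E → ℕ) (c : E → ℝ)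
    -- acyclicity, witnessed by a rank function
    (rank : V → ℕ) (hrank : ∀ e, rank (tl e) < rank (hd e))
    -- the terminal has no outgoing edges
    (hone : ∀ e, tl e ≠ one)
    -- every other node has exactly one high and one low outgoing edge
    (hout : ∀ v : V, v ≠ one → ∀ b : Bool, ∃! e, tl e = v ∧ isHigh e = b)
    -- the root is the only node without incoming edges
    (hroot : ∀ e, hd e ≠ root)
    (hin : ∀ v : V, v ≠ root → ∃ e, hd e = v)
    -- labels of the high edges
    (hq : ∀ e, isHigh e = true → 1 ≤ qB e ∧ qB e ≤ T - p (job e) + 1)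
    (hc : ∀ e, isHigh e = true → c e = ctil (job e) (qB e))
    -- along every root-to-terminal path, the occupied periods of the high edges
    -- are pairwise disjoint
    (hdisj : ∀ es : List E,
      (∃ h : es ≠ [], es.Chain' (fun a b => hd a = tl b) ∧
        tl (es.head h) = root ∧ hd (es.getLast h) = one) →
      ∀ e ∈ es, ∀ f ∈ es, e ≠ f → isHigh e = true → isHigh f = true →
        Disjoint (Finset.Ico (qB e) (qB e + p (job e)))
          (Finset.Ico (qB f) (qB f + p (job f))))
    -- x is a feasible solution of the LP relaxation of the BDDF
    (x : E → ℝ) (hx0 : ∀ e, 0 ≤ x e)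
    (hxassign : ∀ j : Fin n,
      ∑ e ∈ univ.filter (fun e => isHigh e = true ∧ job e = j), x e = 1)
    (hxflow : ∀ v : V, v ≠ root → v ≠ one →
      ∑ e ∈ univ.filter (fun e => tl e = v), x e =
        ∑ e ∈ univ.filter (fun e => hd e = v), x e)
    (hxm : ∑ e ∈ univ.filter (fun e => hd e = one), x e = (m : ℝ))
    -- the projected solution y
    (y : Fin n → ℕ → ℝ)
    (hy : ∀ j t, y j t =
      ∑ e ∈ univ.filter (fun e => isHigh e = true ∧ job e = j ∧ qB e = t), x e) :
    -- y is feasible for the LP relaxation of the TIF, with equal objective value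
    (∀ j t, 0 ≤ y j t) ∧
    (∀ j, ∑ t ∈ Finset.Icc 1 (T - p j + 1), y j t = 1) ∧
    (∀ t ∈ Finset.Icc 1 T,
      ∑ j, ∑ s ∈ Finset.Icc (t - p j + 1) t, y j s ≤ (m : ℝ)) ∧
    (∑ j, ∑ t ∈ Finset.Icc 1 (T - p j + 1), ctil j t * y j t =
      ∑ e ∈ univ.filter (fun e => isHigh e = true), c e * x e) := by
  obtain rfl : y = projectedSolution (fun e => isHigh e = true) job qB x := funext₂ hy
  obtain ⟨hnonneg, hassign, hcap, hcost⟩ := bddf_dominates_tif_general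
    (starts := fun j => Icc 1 (T - p j + 1)) (occupied := fun j s => Ico s (s + p j))
    ⟨not_transGen_precedes_self_of_rank hrank, hroot, hone⟩
    (fun e he => mem_Icc.2 (hq e he)) hc hdisj ⟨hx0, hxflow⟩ hxassign
  exact ⟨hnonneg, hassign, fun t _ => hxm ▸ hcap t _ (by simp only [mem_Icc, mem_Ico]; lia), hcost⟩
end

section
/- (The ATIF dominates the TIF.) Let x be any feasible solution of the LP relaxation of the arc-time-indexed formulation (ATIF). Define ȳ_{jt} = Σ_{i ∈ J₊ \ {j}} x_{ij}^{t−1} for every j ∈ J and t ∈ {1,…,T − p_j + 1}. Then ȳ is a feasible solution of the LP relaxation of the time-indexed formulation (TIF), and if the costs are related by c̄_{jt} = c̃_{j,t+1}, the objective value of ȳ in the TIF equals the objective value of x in the ATIF. Consequently, the optimal value of the LP relaxation of the ATIF is at least the optimal value of the LP relaxation of the TIF. -/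
open Finset

/-!
Let `y` be the projection of a feasible `x` of the ATIF. By flow conservation, the arcs leaving a
job `j` at time `s` are exactly the starts of `j` at time `s - p j`, so the number of machines
processing `j` in period `t + 1` is `∑ s ≤ t, (inflow j s - outflow j s)`. Every arc enters one node
and leaves one node, hence summing over the jobs gives `∑ s ≤ t, (outflow s - inflow s)` of the idle
job, which telescopes to `m - inflow t` by the conservation of idle flow. Thus the machines that
process a job and the machines that turn idle add up to `m`.
-/

section Sums

variable {M : Type*}

theorem sum_Icc_add_one_eq_sum_Ico [AddCommMonoid M] (f : ℕ → M) (a b : ℕ) :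
    ∑ t ∈ Icc (a + 1) b, f t = ∑ t ∈ Ico a b, f (t + 1) := by
  rw [sum_Ico_add', Ico_add_one_right_eq_Icc]

theorem sum_range_eq_sum_range_sub_of_delay [AddCommMonoid M] {f g : ℕ → M} {d u : ℕ}
    (hzero : ∀ s < d, g s = 0) (hdelay : ∀ s, s + d < u → g (s + d) = f s) :
    ∑ s ∈ range u, g s = ∑ s ∈ range (u - d), f s := by
  rcases le_total u d with hud | hdu
  · rw [Nat.sub_eq_zero_of_le hud, sum_range_zero]
    exact sum_eq_zero fun s hs => hzero s ((mem_range.mp hs).trans_le hud)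
  · obtain ⟨k, rfl⟩ := Nat.exists_eq_add_of_le hdu
    rw [sum_range_add, sum_eq_zero fun s hs => hzero s (mem_range.mp hs), zero_add,
      Nat.add_sub_cancel_left]
    refine sum_congr rfl fun s hs => ?_
    rw [add_comm, hdelay s (by have := mem_range.mp hs; omega)]

theorem sum_range_sub_telescope [AddCommGroup M] {f g : ℕ → M} {t : ℕ}
    (h : ∀ s < t, g s = f (s + 1)) :
    ∑ s ∈ range (t + 1), (f s - g s) = f 0 - g t := by
  rw [sum_sub_distrib, sum_range_succ' f, sum_range_succ g,
    sum_congr rfl fun s hs => h s (mem_range.mp hs)]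
  abel

end Sums

section Formulations

variable {ι R : Type*}

/-- The arc variables `x i j t` of the ATIF with idle job `o` exist only for `i ≠ j` and
`p i ≤ t ≤ T - p j`, or for `i = j = o` and `t < T`; a total function `x` encodes them by vanishing
at all other indices. -/
def IsArcSupported [Zero R] (p : ι → ℕ) (o : ι) (T : ℕ) (x : ι → ι → ℕ → R) : Prop :=
  ∀ i j t, x i j t ≠ 0 → (i ≠ j ∧ p i ≤ t ∧ t + p j ≤ T) ∨ (i = o ∧ j = o ∧ t + 1 ≤ T)

variable [Fintype ι]

/-- The flow entering the node of job `j` at time `t`; for `j` other than the idle job this is the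
number of machines starting `j` at time `t`. -/
def inflow [AddCommMonoid R] (x : ι → ι → ℕ → R) (j : ι) (t : ℕ) : R :=
  ∑ i, x i j t

/-- The flow along the arcs at time `t` whose tail is job `i`; for `i` other than the idle job this
is the number of machines completing `i` at time `t`. -/
def outflow [AddCommMonoid R] (x : ι → ι → ℕ → R) (i : ι) (t : ℕ) : R :=
  ∑ j, x i j t

variable [DecidableEq ι]

/-- Feasibility of `x` for the LP relaxation of the ATIF with jobs `j ≠ o`, idle job `o`, horizon
`T` and `m` machines. -/
structure IsATIFFeasible [AddCommMonoidWithOne R] [LE R] (p : ι → ℕ) (o : ι) (T : ℕ) (m : R)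
    (x : ι → ι → ℕ → R) : Prop where
  nonneg : ∀ i j t, 0 ≤ x i j t
  support : IsArcSupported p o T x
  assign : ∀ j, j ≠ o → ∑ i with i ≠ j, ∑ t ∈ Icc (p i) (T - p j), x i j t = 1
  flow : ∀ i, i ≠ o → ∀ t, t ≤ T - p i →
    ∑ j with j ≠ i ∧ p j ≤ t, x j i t = ∑ j with j ≠ i ∧ t + p i + p j ≤ T, x i j (t + p i)
  idle : ∀ t, t + 1 ≤ T →
    ∑ j with p j ≤ t, x j o t = ∑ j with t + p j + 1 ≤ T, x o j (t + 1)
  source : ∑ j, x o j 0 = m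

/-- Feasibility of `y` for the LP relaxation of the TIF with jobs `j ≠ o`, horizon `T` and `m`
machines. Periods are numbered from `1`, so the truncated difference in `capacity` is the paper's
lower limit `max 1 (t - p j + 1)`. -/
structure IsTIFFeasible [AddCommMonoidWithOne R] [LE R] (p : ι → ℕ) (o : ι) (T : ℕ) (m : R)
    (y : ι → ℕ → R) : Prop where
  nonneg : ∀ j t, 0 ≤ y j t
  assign : ∀ j, j ≠ o → ∑ t ∈ Icc 1 (T - p j + 1), y j t = 1
  capacity : ∀ t ∈ Icc 1 T, ∑ j with j ≠ o, ∑ s ∈ Icc (t - p j + 1) t, y j s ≤ m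

/-- The objective value of `y` in the TIF with start costs `c`. -/
def tifObjective [Semiring R] (p : ι → ℕ) (o : ι) (T : ℕ) (c y : ι → ℕ → R) : R :=
  ∑ j with j ≠ o, ∑ t ∈ Icc 1 (T - p j + 1), c j t * y j t

/-- The objective value of `x` in the ATIF with start costs `c`. Arcs into the idle job `o` are
free. -/
def atifObjective [Semiring R] (p : ι → ℕ) (o : ι) (T : ℕ) (c : ι → ℕ → R)
    (x : ι → ι → ℕ → R) : R :=
  ∑ i, ∑ j with j ≠ i ∧ j ≠ o, ∑ t ∈ Icc (p i) (T - p j), c j t * x i j t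

/-- The TIF solution `ȳ` induced by arc variables `x`: period `t` of the TIF begins at time `t - 1`
of the ATIF. -/
def tifOfATIF [AddCommMonoid R] (x : ι → ι → ℕ → R) (j : ι) (t : ℕ) : R :=
  ∑ i with i ≠ j, x i j (t - 1)

end Formulations

section Support

variable {ι R : Type*} {p : ι → ℕ} {o : ι} {T : ℕ} {x : ι → ι → ℕ → R}

namespace IsArcSupported

theorem mem_Icc_of_ne [Zero R] (hx : IsArcSupported p o T x) {i j : ι} {t : ℕ} (hij : i ≠ j)
    (h : x i j t ≠ 0) : t ∈ Icc (p i) (T - p j) := by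
  rcases hx i j t h with ⟨_, hi, hj⟩ | ⟨rfl, rfl, _⟩
  · exact mem_Icc.mpr ⟨hi, by omega⟩
  · exact absurd rfl hij

theorem self_eq_zero [Zero R] (hx : IsArcSupported p o T x) {j : ι} (hj : j ≠ o) (t : ℕ) :
    x j j t = 0 := by
  by_contra h
  rcases hx j j t h with ⟨hne, _⟩ | ⟨ho, _⟩
  exacts [hne rfl, hj ho]

theorem le_and_add_le [Zero R] (hx : IsArcSupported p o T x) (ho : p o = 0) {i j : ι} {t : ℕ}
    (h : x i j t ≠ 0) : p i ≤ t ∧ t + p j ≤ T := by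
  rcases hx i j t h with ⟨_, hbounds⟩ | ⟨rfl, rfl, ht⟩
  · exact hbounds
  · omega

variable [Fintype ι]

theorem outflow_eq_zero_of_lt [AddCommMonoid R] (hx : IsArcSupported p o T x) (ho : p o = 0) {i : ι}
    {t : ℕ} (ht : t < p i) : outflow x i t = 0 :=
  sum_eq_zero fun j _ => by_contra fun h => ht.not_ge (hx.le_and_add_le ho (j := j) h).1

variable [DecidableEq ι]

theorem tifOfATIF_add_one [AddCommMonoid R] (hx : IsArcSupported p o T x) {j : ι} (hj : j ≠ o)
    (t : ℕ) : tifOfATIF x j (t + 1) = inflow x j t :=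
  sum_filter_of_ne fun _ _ h hij => h (hij ▸ hx.self_eq_zero hj t)

theorem sum_mul_tifOfATIF [Semiring R] (hx : IsArcSupported p o T x) (c : ℕ → R) (j : ι) :
    ∑ t ∈ Icc 1 (T - p j + 1), c t * tifOfATIF x j t =
      ∑ i with i ≠ j, ∑ t ∈ Icc (p i) (T - p j), c (t + 1) * x i j t := by
  rw [sum_Icc_add_one_eq_sum_Ico _ 0]
  simp only [tifOfATIF, Nat.add_sub_cancel, mul_sum]
  rw [sum_comm]
  refine sum_congr rfl fun _ hi => (sum_subset (fun t ht => ?_) fun t _ ht => ?_).symm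
  · simp only [mem_Icc, mem_Ico] at ht ⊢
    omega
  · rw [of_not_not (mt (hx.mem_Icc_of_ne (mem_filter.mp hi).2) ht), mul_zero]

theorem tifObjective_tifOfATIF [Semiring R] (hx : IsArcSupported p o T x) (c : ι → ℕ → R) :
    tifObjective p o T c (tifOfATIF x) = atifObjective p o T (fun j t => c j (t + 1)) x := by
  simp only [tifObjective, atifObjective, hx.sum_mul_tifOfATIF]
  refine sum_comm' fun j i => ?_
  simp only [mem_filter_univ, mem_univ, and_true]
  exact and_comm.trans (and_congr_left' ne_comm)

end IsArcSupported

end Support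

section Flow

variable {ι R : Type*} [Fintype ι] [DecidableEq ι] {p : ι → ℕ} {o : ι} {T : ℕ}
  {x : ι → ι → ℕ → R}

theorem sum_ne_inflow_sub_outflow [AddCommGroup R] (x : ι → ι → ℕ → R) (o : ι) (t : ℕ) :
    ∑ j with j ≠ o, (inflow x j t - outflow x j t) = outflow x o t - inflow x o t := by
  have hall : ∑ j, (inflow x j t - outflow x j t) = 0 := by
    rw [sum_sub_distrib, sub_eq_zero]
    exact sum_comm
  rw [filter_ne', sum_erase_eq_sub (mem_univ o), hall, zero_sub, neg_sub]

namespace IsATIFFeasible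

theorem outflow_add_length [AddCommMonoidWithOne R] [LE R] {m : R} (hx : IsATIFFeasible p o T m x)
    (ho : p o = 0) {i : ι} (hi : i ≠ o) {t : ℕ} (ht : t ≤ T - p i) :
    outflow x i (t + p i) = inflow x i t := by
  have hself := hx.support.self_eq_zero hi
  have hin : ∑ j with j ≠ i ∧ p j ≤ t, x j i t = inflow x i t :=
    sum_filter_of_ne fun j _ h =>
      ⟨fun hji => h (hji ▸ hself t), (hx.support.le_and_add_le ho h).1⟩
  have hout : ∑ j with j ≠ i ∧ t + p i + p j ≤ T, x i j (t + p i) = outflow x i (t + p i) :=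
    sum_filter_of_ne fun j _ h =>
      ⟨fun hji => h (hji ▸ hself (t + p i)), (hx.support.le_and_add_le ho h).2⟩
  rw [← hin, ← hout, hx.flow i hi t ht]

theorem inflow_idle [AddCommMonoidWithOne R] [LE R] {m : R} (hx : IsATIFFeasible p o T m x)
    (ho : p o = 0) {t : ℕ} (ht : t + 1 ≤ T) : inflow x o t = outflow x o (t + 1) := by
  have hin : ∑ j with p j ≤ t, x j o t = inflow x o t :=
    sum_filter_of_ne fun j _ h => (hx.support.le_and_add_le ho h).1
  have hout : ∑ j with t + p j + 1 ≤ T, x o j (t + 1) = outflow x o (t + 1) :=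
    sum_filter_of_ne fun j _ h => by
      have := (hx.support.le_and_add_le ho h).2
      omega
  rw [← hin, ← hout, hx.idle t ht]

theorem sum_range_outflow [AddCommMonoidWithOne R] [LE R] {m : R} (hx : IsATIFFeasible p o T m x)
    (ho : p o = 0) {j : ι} (hj : j ≠ o) {u : ℕ} (hu : u ≤ T + 1) :
    ∑ s ∈ range u, outflow x j s = ∑ s ∈ range (u - p j), inflow x j s :=
  sum_range_eq_sum_range_sub_of_delay (fun _ hs => hx.support.outflow_eq_zero_of_lt ho hs)
    fun _ hs => hx.outflow_add_length ho hj (by omega)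

theorem sum_Icc_tifOfATIF [AddCommGroupWithOne R] [LE R] {m : R} (hx : IsATIFFeasible p o T m x)
    (ho : p o = 0) {j : ι} (hj : j ≠ o) {u : ℕ} (hu : u ≤ T + 1) :
    ∑ s ∈ Icc (u - p j + 1) u, tifOfATIF x j s =
      ∑ s ∈ range u, (inflow x j s - outflow x j s) := by
  rw [sum_Icc_add_one_eq_sum_Ico, sum_congr rfl fun s _ => hx.support.tifOfATIF_add_one hj s,
    sum_Ico_eq_sub _ (Nat.sub_le u (p j)), sum_sub_distrib, hx.sum_range_outflow ho hj hu]

theorem load_add_inflow_idle [AddCommGroupWithOne R] [LE R] {m : R} (hx : IsATIFFeasible p o T m x)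
    (ho : p o = 0) {t : ℕ} (ht : t + 1 ≤ T) :
    ∑ j with j ≠ o, ∑ s ∈ Icc (t + 1 - p j + 1) (t + 1), tifOfATIF x j s + inflow x o t = m := by
  have hload : ∑ j with j ≠ o, ∑ s ∈ Icc (t + 1 - p j + 1) (t + 1), tifOfATIF x j s =
      outflow x o 0 - inflow x o t := calc
    _ = ∑ j with j ≠ o, ∑ s ∈ range (t + 1), (inflow x j s - outflow x j s) :=
      sum_congr rfl fun j hj => hx.sum_Icc_tifOfATIF ho (mem_filter.mp hj).2 (by omega)
    _ = ∑ s ∈ range (t + 1), (outflow x o s - inflow x o s) := by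
      rw [sum_comm, sum_congr rfl fun s _ => sum_ne_inflow_sub_outflow x o s]
    _ = outflow x o 0 - inflow x o t :=
      sum_range_sub_telescope fun s hs => hx.inflow_idle ho (by omega)
  rw [hload, sub_add_cancel]
  exact hx.source

theorem isTIFFeasible [Ring R] [PartialOrder R] [IsOrderedAddMonoid R] {m : R}
    (hx : IsATIFFeasible p o T m x) (ho : p o = 0) : IsTIFFeasible p o T m (tifOfATIF x) where
  nonneg j t := sum_nonneg fun i _ => hx.nonneg i j (t - 1)
  assign j hj := by
    simpa only [one_mul, hx.assign j hj] using hx.support.sum_mul_tifOfATIF (fun _ => 1) j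
  capacity t ht := by
    obtain ⟨ht_one, ht_le⟩ := mem_Icc.mp ht
    obtain ⟨t, rfl⟩ := Nat.exists_eq_add_of_le' ht_one
    have hidle : 0 ≤ inflow x o t := sum_nonneg fun i _ => hx.nonneg i o t
    exact (le_add_of_nonneg_right hidle).trans_eq (hx.load_add_inflow_idle ho ht_le)

end IsATIFFeasible

theorem atif_dominates_tif_general [Ring R] [PartialOrder R] [IsOrderedAddMonoid R] {m : R}
    (ho : p o = 0) (hx : IsATIFFeasible p o T m x) {ctil cbar : ι → ℕ → R}
    (hcost : ∀ j t, cbar j t = ctil j (t + 1)) :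
    IsTIFFeasible p o T m (tifOfATIF x) ∧
      tifObjective p o T ctil (tifOfATIF x) = atifObjective p o T cbar x := by
  obtain rfl : cbar = fun j t => ctil j (t + 1) := funext₂ hcost
  exact ⟨hx.isTIFFeasible ho, hx.support.tifObjective_tifOfATIF ctil⟩

end Flow

/-- The arc-time-indexed formulation (ATIF) dominates the time-indexed formulation
(TIF).  Jobs are `1, …, n` (the nonzero elements of `Fin (n+1)`), `0` is the idle
job with `p 0 = 0`.  Let `x` be any feasible solution of the LP relaxation of the
ATIF (with variables supported on their defined index ranges).  Then
`y j t = Σ_{i ≠ j} x i j (t−1)` is a feasible solution of the LP relaxation of the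
TIF, and if the costs are related by `cbar j t = ctil j (t+1)`, the objective value
of `y` in the TIF equals the objective value of `x` in the ATIF; consequently the
optimal LP value of the ATIF is at least that of the TIF. -/
theorem atif_dominates_tif
    (n T m : ℕ) (hm : 1 ≤ m)
    (p : Fin (n + 1) → ℕ) (hp0 : p 0 = 0)
    (hp : ∀ j : Fin (n + 1), j ≠ 0 → 0 < p j) (hpT : ∀ j, p j ≤ T)
    (ctil cbar : Fin (n + 1) → ℕ → ℝ)
    -- cost relation: cbar j t = ctil j (t+1)
    (hcost : ∀ j t, cbar j t = ctil j (t + 1))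
    (x : Fin (n + 1) → Fin (n + 1) → ℕ → ℝ)
    (hx0 : ∀ i j t, 0 ≤ x i j t)
    -- x is supported on the defined variable ranges: x i j t exists only for
    -- i ≠ j with t ∈ {p i, …, T − p j}, or i = j = 0 with t ∈ {0, …, T − 1}
    (hdom : ∀ i j t, x i j t ≠ 0 →
      ((i ≠ j ∧ p i ≤ t ∧ t + p j ≤ T) ∨ (i = 0 ∧ j = 0 ∧ t + 1 ≤ T)))
    -- assignment constraints
    (hassign : ∀ j : Fin (n + 1), j ≠ 0 →
      ∑ i ∈ univ.filter (fun i => i ≠ j),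
        ∑ t ∈ Finset.Icc (p i) (T - p j), x i j t = 1)
    -- flow conservation for each job i ≠ 0 and each t ∈ {0, …, T − p i}
    (hflow : ∀ i : Fin (n + 1), i ≠ 0 → ∀ t, t ≤ T - p i →
      ∑ j ∈ univ.filter (fun j => j ≠ i ∧ p j ≤ t), x j i t =
        ∑ j ∈ univ.filter (fun j => j ≠ i ∧ t + p i + p j ≤ T), x i j (t + p i))
    -- idle-time flow conservation for each t ∈ {0, …, T − 1}
    (hidle : ∀ t, t + 1 ≤ T →
      ∑ j ∈ univ.filter (fun j => p j ≤ t), x j 0 t =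
        ∑ j ∈ univ.filter (fun j => t + p j + 1 ≤ T), x 0 j (t + 1))
    -- m machines leave the source
    (hcap : ∑ j, x 0 j 0 = (m : ℝ))
    -- the projected solution y
    (y : Fin (n + 1) → ℕ → ℝ)
    (hy : ∀ j t, y j t = ∑ i ∈ univ.filter (fun i => i ≠ j), x i j (t - 1)) :
    -- y is feasible for the LP relaxation of the TIF, with equal objective value
    (∀ j t, 0 ≤ y j t) ∧
    (∀ j : Fin (n + 1), j ≠ 0 →
      ∑ t ∈ Finset.Icc 1 (T - p j + 1), y j t = 1) ∧
    (∀ t ∈ Finset.Icc 1 T,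
      ∑ j ∈ univ.filter (fun j : Fin (n + 1) => j ≠ 0),
        ∑ s ∈ Finset.Icc (t - p j + 1) t, y j s ≤ (m : ℝ)) ∧
    (∑ j ∈ univ.filter (fun j : Fin (n + 1) => j ≠ 0),
        ∑ t ∈ Finset.Icc 1 (T - p j + 1), ctil j t * y j t =
      ∑ i : Fin (n + 1), ∑ j ∈ univ.filter (fun j => j ≠ i ∧ j ≠ 0),
        ∑ t ∈ Finset.Icc (p i) (T - p j), cbar j t * x i j t) := by
  obtain rfl : y = tifOfATIF x := funext₂ hy
  obtain ⟨⟨hnonneg, hassign_y, hcapacity⟩, hobj⟩ := atif_dominates_tif_general hp0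
    ⟨hx0, hdom, hassign, hflow, hidle, hcap⟩ hcost
  exact ⟨hnonneg, hassign_y, hcapacity, hobj⟩
end

section
/- Let G = (V, E) be a finite directed acyclic graph with two distinct nodes r and s such that r has no incoming edges and s has no outgoing edges. Let P ⊆ ℝ^E be the polytope of all x with x_e ≥ 0 for every e ∈ E, flow conservation at every node v ∉ {r, s} (the sum of x over incoming edges of v equals the sum over outgoing edges of v), and total outflow of r equal to 1. Then a point x ∈ P is an extreme point of P if and only if x is the 0/1 incidence vector of the edge set of a directed path from r to s. -/
open Finset

/-- `IsPath tl hd r s es`: the nonempty list of edges `es` forms a directed path from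
`r` to `s` in the graph whose edges `e` go from `tl e` to `hd e`. -/
def IsPath {E V : Type} (tl hd : E → V) (r s : V) (es : List E) : Prop :=
  ∃ h : es ≠ [], es.Chain' (fun a b => hd a = tl b) ∧
    tl (es.head h) = r ∧ hd (es.getLast h) = s

/-! A point of a polytope `{x ≥ 0} ∩ A`, with `A` affine, is extreme iff no other point of the
polytope has its support inside that of `x`. A unit flow `x` carries a path from `r` to `s` in its
support, since an edge with positive flow into an inner node is followed by another one and
acyclicity makes this stop. The incidence vector of that path is a unit flow, so it is `x` when `x`
is extreme. Conversely, along a path conservation forces a unit flow supported on it to be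
constantly `1`. Acyclicity is expressed by a preorder on the nodes along which every edge strictly
increases. -/

section ExtremePoints

variable {𝕜 ι : Type*}

theorem support_subset_of_mem_openSegment [Semiring 𝕜] [PartialOrder 𝕜] [IsStrictOrderedRing 𝕜]
    {x y z : ι → 𝕜} (hy : 0 ≤ y) (hz : 0 ≤ z) (hx : x ∈ openSegment 𝕜 y z) :
    Function.support y ⊆ Function.support x := by
  obtain ⟨a, b, ha, hb, -, rfl⟩ := hx
  intro i hi
  have hyi : 0 < y i := (hy i).lt_of_ne' hi
  have hzi : 0 ≤ z i := hz i
  exact (add_pos_of_pos_of_nonneg (mul_pos ha hyi) (mul_nonneg hb.le hzi)).ne'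

variable [Field 𝕜] [LinearOrder 𝕜] [IsStrictOrderedRing 𝕜]

theorem exists_pos_le_smul_of_support_subset [Finite ι] {x y : ι → 𝕜} (hx : 0 ≤ x)
    (h : Function.support y ⊆ Function.support x) : ∃ c : 𝕜, 0 < c ∧ y ≤ c • x := by
  obtain ⟨M, hM⟩ := Finite.exists_le fun i => y i / x i
  refine ⟨max M 1, lt_max_of_lt_right one_pos, fun i => ?_⟩
  calc y i = y i / x i * x i :=
        (div_mul_cancel_of_imp fun hxi => Function.notMem_support.1 fun hyi => h hyi hxi).symm
    _ ≤ max M 1 * x i := mul_le_mul_of_nonneg_right ((hM i).trans (le_max_left M 1)) (hx i)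

theorem exists_mem_openSegment_of_support_subset [Finite ι] {A : AffineSubspace 𝕜 (ι → 𝕜)}
    {x y : ι → 𝕜} (hx : 0 ≤ x) (hxA : x ∈ A) (hyA : y ∈ A)
    (h : Function.support y ⊆ Function.support x) :
    ∃ z, 0 ≤ z ∧ z ∈ A ∧ x ∈ openSegment 𝕜 y z := by
  obtain ⟨c, hc, hyx⟩ := exists_pos_le_smul_of_support_subset hx h
  refine ⟨AffineMap.lineMap x y (-c⁻¹), fun i => ?_, AffineMap.lineMap_mem _ hxA hyA,
    (c + 1)⁻¹, c / (c + 1), by positivity, by positivity, by field_simp; ring, ?_⟩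
  · have hcy : c⁻¹ * y i ≤ x i := (inv_mul_le_iff₀ hc).2 (hyx i)
    have hcx : 0 ≤ c⁻¹ * x i := mul_nonneg (inv_nonneg.2 hc.le) (hx i)
    simp only [AffineMap.lineMap_apply, Pi.zero_apply, vsub_eq_sub, vadd_eq_add, Pi.add_apply,
      Pi.smul_apply, Pi.sub_apply, smul_eq_mul]
    linarith
  · funext i
    simp only [AffineMap.lineMap_apply, vsub_eq_sub, vadd_eq_add, Pi.add_apply, Pi.smul_apply,
      Pi.sub_apply, smul_eq_mul]
    field_simp
    ring

theorem mem_extremePoints_nonneg_inter_iff [Finite ι] {A : AffineSubspace 𝕜 (ι → 𝕜)} {x : ι → 𝕜} :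
    x ∈ (Set.Ici 0 ∩ (A : Set (ι → 𝕜))).extremePoints 𝕜 ↔
      x ∈ Set.Ici 0 ∩ (A : Set (ι → 𝕜)) ∧
        ∀ y ∈ Set.Ici 0 ∩ (A : Set (ι → 𝕜)), Function.support y ⊆ Function.support x → y = x := by
  rw [mem_extremePoints_iff_left]
  refine and_congr_right fun hx => ⟨fun hext y hy hyx => ?_, fun huniq y hy z hz hxyz => ?_⟩
  · obtain ⟨z, hz, hzA, hxyz⟩ := exists_mem_openSegment_of_support_subset hx.1 hx.2 hy.2 hyx
    exact hext y hy z ⟨hz, hzA⟩ hxyz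
  · exact huniq y hy (support_subset_of_mem_openSegment hy.1 hz.1 hxyz)

end ExtremePoints

namespace IsPath

variable {V E : Type} {tl hd : E → V} {r s : V} {es : List E}

protected theorem singleton (e : E) : IsPath tl hd (tl e) (hd e) [e] :=
  ⟨List.cons_ne_nil e [], List.isChain_singleton e, rfl, rfl⟩

protected theorem cons {e : E} (h : IsPath tl hd (hd e) s es) :
    IsPath tl hd (tl e) s (e :: es) := by
  obtain ⟨hne, hchain, hhead, hlast⟩ := h
  refine ⟨List.cons_ne_nil e es, hchain.cons ?_, rfl, by rwa [List.getLast_cons hne]⟩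
  intro a ha
  rw [List.head?_eq_some_head hne, Option.mem_some_iff] at ha
  rw [← ha, hhead]

theorem map_tl_append_eq (h : IsPath tl hd r s es) : es.map tl ++ [s] = r :: es.map hd := by
  obtain ⟨hne, hchain, rfl, rfl⟩ := h
  induction es with
  | nil => exact absurd rfl hne
  | cons e es ih =>
    cases es with
    | nil => rfl
    | cons a es =>
      obtain ⟨hea, hchain⟩ := List.isChain_cons_cons.1 hchain
      simpa [hea] using ih (List.cons_ne_nil a es) hchain

theorem mem_map_tl_iff_mem_map_hd (h : IsPath tl hd r s es) {v : V} (hvr : v ≠ r) (hvs : v ≠ s) :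
    v ∈ es.map tl ↔ v ∈ es.map hd := by
  have hmem : v ∈ es.map tl ++ [s] ↔ v ∈ r :: es.map hd := by rw [h.map_tl_append_eq]
  simpa only [List.mem_append, List.mem_cons, hvr, hvs, List.not_mem_nil,
    or_false, false_or] using hmem

theorem mem_map_tl (h : IsPath tl hd r s es) : r ∈ es.map tl := by
  obtain ⟨hne, -, rfl, -⟩ := h
  exact List.mem_map_of_mem (List.head_mem hne)

variable [Preorder V]

theorem le_tl (hlt : ∀ e, tl e < hd e) (h : IsPath tl hd r s es) : ∀ e ∈ es, r ≤ tl e := by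
  obtain ⟨hne, hchain, rfl, -⟩ := h
  exact hchain.induction _ _ (fun a b hab ha => (ha.trans (hlt a).le).trans hab.le)
    fun _ => le_rfl

theorem hd_le (hlt : ∀ e, tl e < hd e) (h : IsPath tl hd r s es) : ∀ e ∈ es, hd e ≤ s := by
  obtain ⟨hne, hchain, -, rfl⟩ := h
  exact hchain.backwards_induction _ _ (fun a b hab hb => (hab.le.trans (hlt b).le).trans hb)
    fun _ => le_rfl

theorem pairwise_hd_le_tl (hlt : ∀ e, tl e < hd e) (h : IsPath tl hd r s es) :
    es.Pairwise fun a b => hd a ≤ tl b := by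
  have : IsTrans E fun a b => hd a ≤ tl b :=
    ⟨fun a b c hab hbc => (hab.trans (hlt b).le).trans hbc⟩
  exact (h.2.1.imp fun a b hab => hab.le).pairwise

theorem injOn_tl (hlt : ∀ e, tl e < hd e) (h : IsPath tl hd r s es) :
    Set.InjOn tl {e | e ∈ es} := by
  have hnodup : (es.map tl).Nodup := List.pairwise_map.2 <|
    (h.pairwise_hd_le_tl hlt).imp fun hab => ((hlt _).trans_le hab).ne
  exact fun a ha b hb => List.inj_on_of_nodup_map hnodup ha hb

theorem injOn_hd (hlt : ∀ e, tl e < hd e) (h : IsPath tl hd r s es) :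
    Set.InjOn hd {e | e ∈ es} := by
  have hnodup : (es.map hd).Nodup := List.pairwise_map.2 <|
    (h.pairwise_hd_le_tl hlt).imp fun hab => (hab.trans_lt (hlt _)).ne
  exact fun a ha b hb => List.inj_on_of_nodup_map hnodup ha hb

end IsPath

theorem sum_fiber_eq_of_injOn {ι κ M : Type*} [Fintype ι] [DecidableEq κ] [AddCommMonoid M]
    {f : ι → κ} {t : Set ι} {y : ι → M} (hf : Set.InjOn f t) (hy : Function.support y ⊆ t) {i : ι}
    (hi : i ∈ t) : ∑ j with f j = f i, y j = y i := by
  refine sum_eq_single_of_mem i (by simp) fun j hj hji => ?_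
  exact Function.notMem_support.1 fun hyj => hji (hf (hy hyj) hi (mem_filter.1 hj).2)

section IncidenceVector

variable {E : Type*} [DecidableEq E] {𝕜 : Type*} {es : List E}

section ZeroOne

variable [Zero 𝕜] [One 𝕜]

variable (𝕜) in
/-- The 0/1 vector of the set of edges occurring in the list `es`; repetitions in `es` are not
counted. -/
def incidenceVector (es : List E) : E → 𝕜 :=
  fun e => if e ∈ es then 1 else 0

theorem incidenceVector_of_mem {e : E} (he : e ∈ es) : incidenceVector 𝕜 es e = 1 :=
  if_pos he

theorem incidenceVector_of_notMem {e : E} (he : e ∉ es) : incidenceVector 𝕜 es e = 0 :=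
  if_neg he

theorem support_incidenceVector_subset :
    Function.support (incidenceVector 𝕜 es) ⊆ {e | e ∈ es} :=
  fun _ he => not_imp_comm.1 incidenceVector_of_notMem he

theorem incidenceVector_nonneg [Preorder 𝕜] [ZeroLEOneClass 𝕜] : 0 ≤ incidenceVector 𝕜 es := by
  intro e
  unfold incidenceVector
  split_ifs
  exacts [zero_le_one, le_rfl]

end ZeroOne

theorem sum_fiber_incidenceVector [AddCommMonoidWithOne 𝕜] [Fintype E] {V : Type*} [DecidableEq V]
    {f : E → V} (hf : Set.InjOn f {e | e ∈ es}) (v : V) :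
    ∑ e with f e = v, incidenceVector 𝕜 es e = if v ∈ es.map f then 1 else 0 := by
  split_ifs with hv
  · obtain ⟨e, he, rfl⟩ := List.mem_map.1 hv
    rw [sum_fiber_eq_of_injOn hf support_incidenceVector_subset he, incidenceVector_of_mem he]
  · refine sum_eq_zero fun e he => incidenceVector_of_notMem fun hes => hv ?_
    exact (mem_filter.1 he).2 ▸ List.mem_map_of_mem hes

end IncidenceVector

theorem exists_mem_fiber_pos_of_sum_pos {ι κ M : Type*} [Fintype ι] [DecidableEq κ]
    [AddCommMonoid M] [PartialOrder M] [IsOrderedAddMonoid M] {f : ι → κ} {y : ι → M} (hy : 0 ≤ y)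
    {k : κ} (hk : 0 < ∑ i with f i = k, y i) : ∃ i, f i = k ∧ 0 < y i := by
  obtain ⟨i, hi, hpos⟩ := (sum_pos_iff_of_nonneg fun i _ => hy i).1 hk
  exact ⟨i, (mem_filter.1 hi).2, hpos⟩

/-- The space of unit flows of either sign: the vectors that satisfy flow conservation outside
`{r, s}` and have total outflow `1` at `r`. -/
def unitFlowSpace {V E : Type*} [Fintype E] [DecidableEq V] (𝕜 : Type*) [Ring 𝕜] (tl hd : E → V)
    (r s : V) : AffineSubspace 𝕜 (E → 𝕜) where
  carrier := {x |
    (∀ v, v ≠ r → v ≠ s → ∑ e with hd e = v, x e = ∑ e with tl e = v, x e) ∧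
      ∑ e with tl e = r, x e = 1}
  smul_vsub_vadd_mem' c x y z hx hy hz := by
    have hsum (t : Finset E) : ∑ e ∈ t, (c • (x -ᵥ y) +ᵥ z) e =
        c * (∑ e ∈ t, x e - ∑ e ∈ t, y e) + ∑ e ∈ t, z e := by
      simp only [vsub_eq_sub, vadd_eq_add, Pi.add_apply, Pi.smul_apply, Pi.sub_apply, smul_eq_mul,
        sum_add_distrib, ← mul_sum, sum_sub_distrib]
    refine ⟨fun v hvr hvs => ?_, ?_⟩
    · rw [hsum, hsum, hx.1 v hvr hvs, hy.1 v hvr hvs, hz.1 v hvr hvs]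
    · rw [hsum, hx.2, hy.2, hz.2, sub_self, mul_zero, zero_add]

/-- The polytope of nonnegative unit flows from `r` to `s`. -/
def unitFlowPolytope {V E : Type*} [Fintype E] [DecidableEq V] (𝕜 : Type*) [Ring 𝕜]
    [PartialOrder 𝕜] (tl hd : E → V) (r s : V) : Set (E → 𝕜) :=
  Set.Ici 0 ∩ unitFlowSpace 𝕜 tl hd r s

section UnitFlow

variable {V E : Type} [Fintype E] [DecidableEq V] [Preorder V] {𝕜 : Type*} {tl hd : E → V}
  {r s : V}

section Ring

variable [Ring 𝕜] [DecidableEq E] {es : List E}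

theorem IsPath.eq_incidenceVector_of_support_subset (hlt : ∀ e, tl e < hd e)
    (h : IsPath tl hd r s es) {x : E → 𝕜} (hx : x ∈ unitFlowSpace 𝕜 tl hd r s)
    (hsupp : Function.support x ⊆ {e | e ∈ es}) : x = incidenceVector 𝕜 es := by
  have hout {e : E} (he : e ∈ es) : ∑ a with tl a = tl e, x a = x e :=
    sum_fiber_eq_of_injOn (h.injOn_tl hlt) hsupp he
  have hin {e : E} (he : e ∈ es) : ∑ a with hd a = hd e, x a = x e :=
    sum_fiber_eq_of_injOn (h.injOn_hd hlt) hsupp he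
  have hstep (a b : E) (hab : hd a = tl b ∧ a ∈ es ∧ b ∈ es) (ha : x a = 1) : x b = 1 := by
    obtain ⟨hab, hae, hbe⟩ := hab
    have hr : hd a ≠ r := ((h.le_tl hlt a hae).trans_lt (hlt a)).ne'
    have hs : hd a ≠ s := hab ▸ ((hlt b).trans_le (h.hd_le hlt b hbe)).ne
    rw [← hout hbe, ← hab, ← hx.1 _ hr hs, hin hae, ha]
  have hone : ∀ e ∈ es, x e = 1 := by
    have ⟨hne, hchain, hhead, _⟩ := h
    refine List.IsChain.induction _ es
      (hchain.imp_of_mem_imp fun a b ha hb hab => ⟨hab, ha, hb⟩) hstep fun _ => ?_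
    rw [← hout (List.head_mem hne), hhead, hx.2]
  funext e
  by_cases he : e ∈ es
  · rw [hone e he, incidenceVector_of_mem he]
  · rw [Function.notMem_support.1 fun hxe => he (hsupp hxe), incidenceVector_of_notMem he]

theorem IsPath.incidenceVector_mem_unitFlowSpace (hlt : ∀ e, tl e < hd e)
    (h : IsPath tl hd r s es) : incidenceVector 𝕜 es ∈ unitFlowSpace 𝕜 tl hd r s := by
  have hout := sum_fiber_incidenceVector (𝕜 := 𝕜) (h.injOn_tl hlt)
  have hin := sum_fiber_incidenceVector (𝕜 := 𝕜) (h.injOn_hd hlt)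
  refine ⟨fun v hvr hvs => ?_, ?_⟩
  · simp only [hout, hin, h.mem_map_tl_iff_mem_map_hd hvr hvs]
  · rw [hout, if_pos h.mem_map_tl]

end Ring

section OrderedRing

variable [Ring 𝕜] [PartialOrder 𝕜] [IsStrictOrderedRing 𝕜] {x : E → 𝕜}

theorem exists_isPath_pos_of_pos (hlt : ∀ e, tl e < hd e)
    (hx : x ∈ unitFlowPolytope 𝕜 tl hd r s) (e : E) (hre : r ≤ tl e) (he : 0 < x e) :
    ∃ es, IsPath tl hd (tl e) s es ∧ ∀ a ∈ es, 0 < x a := by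
  have ⟨hx0, hcons, _⟩ := hx
  have hwf : WellFounded (InvImage (· > ·) tl) := Finite.wellFounded_of_trans_of_irrefl _
  induction e using hwf.induction with
  | _ e ih =>
  by_cases hs : hd e = s
  · exact ⟨[e], hs ▸ IsPath.singleton e, by simpa using he⟩
  have hr : r < hd e := hre.trans_lt (hlt e)
  have hin : 0 < ∑ a with hd a = hd e, x a :=
    sum_pos' (fun a _ => hx0 a) ⟨e, by simp, he⟩
  obtain ⟨a, hae, ha⟩ := exists_mem_fiber_pos_of_sum_pos hx0 (hcons (hd e) hr.ne' hs ▸ hin)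
  obtain ⟨es, hes, hpos⟩ := ih a (show tl e < tl a from hae ▸ hlt e) (hae ▸ hr.le) ha
  exact ⟨e :: es, (hae ▸ hes).cons, List.forall_mem_cons.2 ⟨he, hpos⟩⟩

theorem exists_isPath_pos (hlt : ∀ e, tl e < hd e) (hx : x ∈ unitFlowPolytope 𝕜 tl hd r s) :
    ∃ es, IsPath tl hd r s es ∧ ∀ e ∈ es, 0 < x e := by
  obtain ⟨e, rfl, he⟩ := exists_mem_fiber_pos_of_sum_pos hx.1 (hx.2.2 ▸ one_pos)
  exact exists_isPath_pos_of_pos hlt hx e le_rfl he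

theorem IsPath.incidenceVector_mem_unitFlowPolytope [DecidableEq E] {es : List E}
    (hlt : ∀ e, tl e < hd e) (h : IsPath tl hd r s es) :
    incidenceVector 𝕜 es ∈ unitFlowPolytope 𝕜 tl hd r s :=
  ⟨incidenceVector_nonneg, h.incidenceVector_mem_unitFlowSpace hlt⟩

end OrderedRing

variable (tl hd r s) in
theorem extremePoints_unit_flow_polytope_iff_path_general [DecidableEq E] [Field 𝕜]
    [LinearOrder 𝕜] [IsStrictOrderedRing 𝕜] (hlt : ∀ e, tl e < hd e) (x : E → 𝕜) :
    x ∈ (unitFlowPolytope 𝕜 tl hd r s).extremePoints 𝕜 ↔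
      ∃ es : List E, IsPath tl hd r s es ∧ x = incidenceVector 𝕜 es := by
  rw [unitFlowPolytope, mem_extremePoints_nonneg_inter_iff]
  constructor
  · rintro ⟨hx, huniq⟩
    obtain ⟨es, hes, hpos⟩ := exists_isPath_pos hlt hx
    have hsupp : Function.support (incidenceVector 𝕜 es) ⊆ Function.support x :=
      support_incidenceVector_subset.trans fun e he => (hpos e he).ne'
    exact ⟨es, hes, (huniq _ (hes.incidenceVector_mem_unitFlowPolytope hlt) hsupp).symm⟩
  · rintro ⟨es, hes, rfl⟩
    refine ⟨hes.incidenceVector_mem_unitFlowPolytope hlt, fun y hy hsupp => ?_⟩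
    exact hes.eq_incidenceVector_of_support_subset hlt hy.2
      (hsupp.trans support_incidenceVector_subset)

end UnitFlow

/-- In a finite DAG with source `r` (no incoming edges) and sink `s` (no outgoing
edges), a point of the unit-flow polytope `P` (nonnegative flows with conservation
outside `{r, s}` and total outflow `1` at `r`) is an extreme point of `P` if and
only if it is the 0/1 incidence vector of a directed path from `r` to `s`. -/
theorem extremePoints_unit_flow_polytope_iff_path
    {V E : Type} [Fintype V] [Fintype E] [DecidableEq V] [DecidableEq E]
    (tl hd : E → V) (r s : V) (hrs : r ≠ s)
    (hr : ∀ e, hd e ≠ r) (hs : ∀ e, tl e ≠ s)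
    -- acyclicity, witnessed by a rank function
    (rank : V → ℕ) (hrank : ∀ e, rank (tl e) < rank (hd e))
    (P : Set (E → ℝ))
    (hP : P = {x | (∀ e, 0 ≤ x e) ∧
      (∀ v, v ≠ r → v ≠ s →
        ∑ e ∈ univ.filter (fun e => hd e = v), x e =
          ∑ e ∈ univ.filter (fun e => tl e = v), x e) ∧
      ∑ e ∈ univ.filter (fun e => tl e = r), x e = 1})
    (x : E → ℝ) :
    x ∈ P.extremePoints ℝ ↔
      ∃ es : List E, IsPath tl hd r s es ∧
        x = fun e => if e ∈ es then 1 else 0 := by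
  let : Preorder V := Preorder.lift rank
  subst hP
  exact extremePoints_unit_flow_polytope_iff_path_general tl hd r s hrank x
end

section
/- Let G = (V, E) be a finite directed acyclic graph with two distinct nodes r and s such that r has no incoming edges and s has no outgoing edges, and let m ≥ 0 be a real number. Let x : E → ℝ with x_e ≥ 0 satisfy flow conservation at every node v ∉ {r, s} and have total outflow of r equal to m. If E' ⊆ E is a set of edges such that every directed path from r to s contains at most one edge of E', then Σ_{e∈E'} x_e ≤ m. -/
open Finset

/-!
Let `F` be the set of edges of `E'` that carry flow and `T` the set of nodes that can be reached
from the head of an edge of `F`. No edge leaves `T`, so the flow entering `T` is at most the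
outflow of `r`. Every edge of `F` enters `T`: if the tail of `e ∈ F` were reachable from the head
of `f ∈ F`, then following positive flow backwards from `f` to `r` and forwards from `e` to `s`,
which terminates because the graph is finite and acyclic, would give a path from `r` to `s`
through both `f` and `e`.
-/

/-- `IsWalk tl hd u v es`: the edges `es` form a directed path from `u` to `v`. Unlike in `IsPath`,
`es` may be empty, so that every node is joined to itself and walks can be concatenated freely. -/
inductive IsWalk {E V : Type*} (tl hd : E → V) : V → V → List E → Prop
  | nil (v : V) : IsWalk tl hd v v []
  | cons (e : E) {v : V} {es : List E} (h : IsWalk tl hd (hd e) v es) :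
      IsWalk tl hd (tl e) v (e :: es)

namespace IsWalk

theorem append {E V : Type*} {tl hd : E → V} {u v w : V} {es es' : List E}
    (h : IsWalk tl hd u v es) (h' : IsWalk tl hd v w es') : IsWalk tl hd u w (es ++ es') := by
  induction h with
  | nil => exact h'
  | cons e _ ih => exact (ih h').cons e

theorem concat {E V : Type*} {tl hd : E → V} {u : V} {es : List E} {e : E}
    (h : IsWalk tl hd u (tl e) es) : IsWalk tl hd u (hd e) (es ++ [e]) :=
  h.append ((nil (hd e)).cons e)

theorem isPath {E V : Type} {tl hd : E → V} {u v : V} {es : List E}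
    (h : IsWalk tl hd u v es) (hes : es ≠ []) : IsPath tl hd u v es := by
  induction h with
  | nil => exact absurd rfl hes
  | cons e h ih =>
    generalize hu : hd e = u at h ih
    cases h with
    | nil => exact ⟨hes, List.isChain_singleton e, rfl, hu⟩
    | cons e' h =>
      obtain ⟨hne, hchain, hhead, hlast⟩ := ih (List.cons_ne_nil _ _)
      exact ⟨hes, List.isChain_cons_cons.2 ⟨hu.trans hhead.symm, hchain⟩, rfl,
        (congrArg hd (List.getLast_cons hne)).trans hlast⟩

end IsWalk

theorem exists_isPath_one_lt_countP {E V : Type} {tl hd : E → V} {r s : V} {f e : E}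
    {p : E → Bool} (hf : p f) (he : p e) (hrf : ∃ es, IsWalk tl hd r (tl f) es)
    (hfe : ∃ es, IsWalk tl hd (hd f) (tl e) es) (hes : ∃ es, IsWalk tl hd (hd e) s es) :
    ∃ es, IsPath tl hd r s es ∧ 1 < es.countP p := by
  obtain ⟨as, has⟩ := hrf
  obtain ⟨bs, hbs⟩ := hfe
  obtain ⟨cs, hcs⟩ := hes
  have hwalk : IsWalk tl hd r s (as ++ f :: (bs ++ e :: cs)) :=
    has.append ((hbs.append (hcs.cons e)).cons f)
  refine ⟨_, hwalk.isPath (by simp), ?_⟩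
  simp only [List.countP_append, List.countP_cons_of_pos hf, List.countP_cons_of_pos he]
  lia

section Acyclic

variable {E V α : Type*} [Finite E] [Preorder α] {tl hd : E → V} {rank : V → α} {P : E → Prop}

theorem exists_isWalk_from_source {r : V} (hrank : ∀ e, rank (tl e) < rank (hd e))
    (hext : ∀ e, P e → tl e ≠ r → ∃ e', P e' ∧ hd e' = tl e) {e : E} (he : P e) :
    ∃ es, IsWalk tl hd r (tl e) es := by
  let : Preorder E := Preorder.lift fun e => rank (tl e)
  induction e using WellFoundedLT.induction with
  | ind e ih =>
    by_cases her : tl e = r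
    · exact ⟨[], her ▸ .nil (tl e)⟩
    · obtain ⟨e', he', hadj⟩ := hext e he her
      obtain ⟨es, hes⟩ := ih e' (hadj ▸ hrank e' : rank (tl e') < rank (tl e)) he'
      exact ⟨es ++ [e'], hadj ▸ hes.concat⟩

theorem exists_isWalk_to_sink {s : V} (hrank : ∀ e, rank (tl e) < rank (hd e))
    (hext : ∀ e, P e → hd e ≠ s → ∃ e', P e' ∧ tl e' = hd e) {e : E} (he : P e) :
    ∃ es, IsWalk tl hd (hd e) s es := by
  let : Preorder E := Preorder.lift fun e => rank (hd e)
  induction e using WellFoundedGT.induction with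
  | ind e ih =>
    by_cases hes : hd e = s
    · exact ⟨[], hes ▸ .nil _⟩
    · obtain ⟨e', he', hadj⟩ := hext e he hes
      obtain ⟨es, hwalk⟩ := ih e' (hadj ▸ hrank e' : rank (hd e) < rank (hd e')) he'
      exact ⟨e' :: es, hadj ▸ hwalk.cons e'⟩

end Acyclic

/-- The nodes that can be reached from the head of an edge of `F`, that head included: the far side
of the cut through which all the flow on `F` passes. -/
def downstream {E V : Type*} (tl hd : E → V) (F : Set E) : Set V :=
  {v | ∃ f ∈ F, ∃ es, IsWalk tl hd (hd f) v es}

section Downstream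

variable {E V : Type*} {tl hd : E → V} {F : Set E} {e : E}

theorem head_mem_downstream (he : e ∈ F) : hd e ∈ downstream tl hd F :=
  ⟨e, he, [], .nil _⟩

theorem head_mem_downstream_of_tail_mem (he : tl e ∈ downstream tl hd F) :
    hd e ∈ downstream tl hd F := by
  obtain ⟨f, hf, es, hes⟩ := he
  exact ⟨f, hf, es ++ [e], hes.concat⟩

end Downstream

section Flow

variable {E V M : Type*} [Fintype E] [DecidableEq V] [AddCommMonoid M] [PartialOrder M]
  {x : E → M}

theorem exists_pos_of_sum_fiber_le [IsOrderedAddMonoid M] {g g' : E → V} (hx0 : ∀ e, 0 ≤ x e)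
    {e : E} (he : 0 < x e) (hle : ∑ i with g i = g e, x i ≤ ∑ i with g' i = g e, x i) :
    ∃ e', 0 < x e' ∧ g' e' = g e := by
  have hpos : 0 < ∑ i with g' i = g e, x i :=
    he.trans_le <| (single_le_sum (fun i _ => hx0 i) (by simp)).trans hle
  obtain ⟨e', he', hxe'⟩ := exists_ne_zero_of_sum_ne_zero hpos.ne'
  exact ⟨e', (hx0 e').lt_of_ne' hxe', (mem_filter.1 he').2⟩

theorem sum_fiber_le_of_conserved [IsOrderedAddMonoid M] {g g' : E → V} {r s v : V}
    (hx0 : ∀ e, 0 ≤ x e) (hs : ∀ e, g e ≠ s)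
    (hcons : ∀ v, v ≠ r → v ≠ s → ∑ e with g' e = v, x e = ∑ e with g e = v, x e) (hv : v ≠ r) :
    ∑ e with g e = v, x e ≤ ∑ e with g' e = v, x e := by
  obtain rfl | hvs := eq_or_ne v s
  · simpa [hs] using sum_nonneg fun e _ => hx0 e
  · exact (hcons v hv hvs).ge

theorem sum_preimage_le_of_sum_fiber_le [IsOrderedAddMonoid M] {g g' : E → V} {S : Finset V}
    (hle : ∀ v ∈ S, ∑ e with g e = v, x e ≤ ∑ e with g' e = v, x e) :
    ∑ e with g e ∈ S, x e ≤ ∑ e with g' e ∈ S, x e := by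
  rw [← sum_fiberwise_eq_sum_filter, ← sum_fiberwise_eq_sum_filter]
  exact sum_le_sum hle

theorem sum_cut_le_outflow [IsOrderedCancelAddMonoid M] {tl hd : E → V} {r : V}
    (hx0 : ∀ e, 0 ≤ x e) (hout : ∀ v ≠ r, ∑ e with tl e = v, x e ≤ ∑ e with hd e = v, x e)
    {T : Set V} [DecidablePred (· ∈ T)] (hT : ∀ e, tl e ∈ T → hd e ∈ T) :
    ∑ e with tl e ∉ T ∧ hd e ∈ T, x e ≤ ∑ e with tl e = r, x e := by
  -- `V` may be infinite, so only tails of edges are collected; other nodes have no outflow.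
  let S : Finset V := {v ∈ univ.image tl | v ∉ T ∧ v ≠ r}
  have hsplit : ∑ e with tl e ∉ T, x e =
      ∑ e with tl e ∉ T ∧ hd e ∈ T, x e + ∑ e with hd e ∉ T, x e := by
    rw [← sum_filter_add_sum_filter_not _ fun e => hd e ∈ T, filter_filter, filter_filter]
    congr! 3 with e
    exact and_iff_right_of_imp (mt (hT e))
  refine le_of_add_le_add_right (a := ∑ e with hd e ∉ T, x e) ?_
  calc ∑ e with tl e ∉ T ∧ hd e ∈ T, x e + ∑ e with hd e ∉ T, x e
      = ∑ e with tl e ∉ T, x e := hsplit.symm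
    _ = ∑ e with tl e ∉ T ∧ tl e = r, x e + ∑ e with tl e ∈ S, x e := by
        rw [← sum_filter_add_sum_filter_not _ fun e => tl e = r, filter_filter, filter_filter]
        simp [S]
    _ ≤ ∑ e with tl e = r, x e + ∑ e with hd e ∈ S, x e := by
        refine add_le_add ?_ (sum_preimage_le_of_sum_fiber_le fun v hv => hout v ?_)
        · exact sum_le_sum_of_subset_of_nonneg (monotone_filter_right univ fun _ _ h => And.right h)
            fun e _ _ => hx0 e
        · exact (mem_filter.1 hv).2.2
    _ ≤ ∑ e with tl e = r, x e + ∑ e with hd e ∉ T, x e := by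
        refine add_le_add le_rfl ?_
        exact sum_le_sum_of_subset_of_nonneg
          (monotone_filter_right univ fun _ _ h => (mem_filter.1 h).2.1) fun e _ _ => hx0 e

end Flow

theorem flow_on_path_incomparable_edge_set_le_value_general
    {V E : Type} {α M : Type*} [Fintype E] [DecidableEq V] [DecidableEq E] [Preorder α]
    [AddCommMonoid M] [PartialOrder M] [IsOrderedCancelAddMonoid M]
    (tl hd : E → V) (r s : V) (rank : V → α) (hrank : ∀ e, rank (tl e) < rank (hd e))
    (x : E → M) (hx0 : ∀ e, 0 ≤ x e)
    (hout : ∀ v ≠ r, ∑ e with tl e = v, x e ≤ ∑ e with hd e = v, x e)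
    (hin : ∀ v ≠ s, ∑ e with hd e = v, x e ≤ ∑ e with tl e = v, x e)
    (E' : Finset E)
    (hE' : ∀ es : List E, IsPath tl hd r s es → es.countP (fun e => decide (e ∈ E')) ≤ 1) :
    ∑ e ∈ E', x e ≤ ∑ e with tl e = r, x e := by
  classical
  let T : Set V := downstream tl hd {e | e ∈ E' ∧ 0 < x e}
  have htail : ∀ e ∈ E', 0 < x e → tl e ∉ T := by
    rintro e he hxe ⟨f, ⟨hf, hxf⟩, hfe⟩
    have hrf := exists_isWalk_from_source (P := (0 < x ·)) hrank
      (fun e he hr => exists_pos_of_sum_fiber_le hx0 he (hout _ hr)) hxf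
    have hes := exists_isWalk_to_sink (P := (0 < x ·)) hrank
      (fun e he hs => exists_pos_of_sum_fiber_le hx0 he (hin _ hs)) hxe
    obtain ⟨es, hpath, hcount⟩ :=
      exists_isPath_one_lt_countP (p := fun e => decide (e ∈ E'))
        (decide_eq_true hf) (decide_eq_true he) hrf hfe hes
    exact (hE' es hpath).not_gt hcount
  have hcross : {e ∈ E' | x e ≠ 0} ⊆ ({e | tl e ∉ T ∧ hd e ∈ T} : Finset E) := fun e h => by
    obtain ⟨he, hne⟩ := mem_filter.1 h
    have hxe := (hx0 e).lt_of_ne' hne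
    exact mem_filter.2 ⟨mem_univ e, htail e he hxe, head_mem_downstream ⟨he, hxe⟩⟩
  calc ∑ e ∈ E', x e = ∑ e ∈ E' with x e ≠ 0, x e := (sum_filter_ne_zero E').symm
    _ ≤ ∑ e with tl e ∉ T ∧ hd e ∈ T, x e :=
        sum_le_sum_of_subset_of_nonneg hcross fun e _ _ => hx0 e
    _ ≤ ∑ e with tl e = r, x e :=
        sum_cut_le_outflow hx0 hout fun _ => head_mem_downstream_of_tail_mem

/-- In a finite DAG with source `r` (no incoming edges) and sink `s` (no outgoing
edges), let `x ≥ 0` be a flow of value `m ≥ 0` from `r` to `s`.  If every directed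
path from `r` to `s` contains at most one edge of `E'`, then the total flow on `E'`
is at most `m`. -/
theorem flow_on_path_incomparable_edge_set_le_value
    {V E : Type} [Fintype V] [Fintype E] [DecidableEq V] [DecidableEq E]
    (tl hd : E → V) (r s : V) (hrs : r ≠ s)
    (hr : ∀ e, hd e ≠ r) (hs : ∀ e, tl e ≠ s)
    -- acyclicity, witnessed by a rank function
    (rank : V → ℕ) (hrank : ∀ e, rank (tl e) < rank (hd e))
    (m : ℝ) (hm : 0 ≤ m) (x : E → ℝ) (hx0 : ∀ e, 0 ≤ x e)
    -- flow conservation at every node other than r and s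
    (hcons : ∀ v, v ≠ r → v ≠ s →
      ∑ e ∈ univ.filter (fun e => hd e = v), x e =
        ∑ e ∈ univ.filter (fun e => tl e = v), x e)
    -- total outflow of r equal to m
    (hval : ∑ e ∈ univ.filter (fun e => tl e = r), x e = m)
    (E' : Finset E)
    -- every r-s path contains at most one edge of E'
    (hE' : ∀ es : List E, IsPath tl hd r s es →
      es.countP (fun e => decide (e ∈ E')) ≤ 1) :
    ∑ e ∈ E', x e ≤ m := by
  rw [← hval]
  exact flow_on_path_incomparable_edge_set_le_value_general tl hd r s rank hrank x hx0
    (fun _ => sum_fiber_le_of_conserved hx0 hs hcons)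
    (fun _ => sum_fiber_le_of_conserved hx0 hr fun v hvs hvr => (hcons v hvr hvs).symm) E' hE'
end
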